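/- arXiv:1808.08849 — 2 statements merged into one kernel-verified Lean document; each statement's English description precedes it below -/
import Mathlib

section
/- Let E belong to the class A(λ,n,m). If there exists a dust-like self-similar set F that is Lipschitz equivalent to E, then there exists an integer k ≥ 2 such that the polynomial x^{2k} − n·x^k + m is reducible in ℤ[x]. -/
open MeasureTheory Polynomial

/-- The class `𝒜(λ, n, m)` of self-similar subsets of `ℝ` with `m` exact overlaps,
generated by `n` similitudes `fᵢ x = λ x + bᵢ` of the same ratio `λ`. -/
def IsInClassA (lam : ℝ) (n m : ℕ) (E : Set ℝ) : Prop :=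
  lam ∈ Set.Ioo (0 : ℝ) 1 ∧ 1 ≤ m ∧ m + 2 ≤ n ∧
  ∃ b : ℕ → ℝ,
    b 0 = 0 ∧ b (n - 1) = 1 - lam ∧
    (∀ i, i + 1 < n → b i < b (i + 1)) ∧
    (∀ i, i + 1 < n →
      (Set.Icc (b i) (b i + lam) ∩ Set.Icc (b (i + 1)) (b (i + 1) + lam)).Nonempty →
        volume (Set.Icc (b i) (b i + lam) ∩ Set.Icc (b (i + 1)) (b (i + 1) + lam)) = 0 ∨
        volume (Set.Icc (b i) (b i + lam) ∩ Set.Icc (b (i + 1)) (b (i + 1) + lam)) =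
          ENNReal.ofReal (lam * lam)) ∧
    {i : ℕ | i + 1 < n ∧
      volume (Set.Icc (b i) (b i + lam) ∩ Set.Icc (b (i + 1)) (b (i + 1) + lam)) =
        ENNReal.ofReal (lam * lam)}.ncard = m ∧
    E.Nonempty ∧ IsCompact E ∧
    E = ⋃ i ∈ Finset.range n, (fun x => lam * x + b i) '' E

/-- A dust-like self-similar set in `ℝ^d`: the attractor of `t ≥ 2` contracting similitudes
whose images are pairwise disjoint (strong separation condition). -/
def IsDustLike {d : ℕ} (F : Set (EuclideanSpace ℝ (Fin d))) : Prop :=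
  F.Nonempty ∧ IsCompact F ∧
  ∃ t : ℕ, 2 ≤ t ∧
    ∃ (g : Fin t → EuclideanSpace ℝ (Fin d) → EuclideanSpace ℝ (Fin d)) (r : Fin t → ℝ),
      (∀ j, r j ∈ Set.Ioo (0 : ℝ) 1) ∧
      (∀ j x y, dist (g j x) (g j y) = r j * dist x y) ∧
      F = ⋃ j, g j '' F ∧
      (∀ j j', j ≠ j' → Disjoint (g j '' F) (g j' '' F))

/-- Lipschitz equivalence of two sets in (possibly different) metric spaces. -/
def LipEquiv {X Y : Type*} [MetricSpace X] [MetricSpace Y] (A : Set X) (B : Set Y) : Prop :=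
  ∃ f : A → B, Function.Bijective f ∧ ∃ C : ℝ, 0 < C ∧
    ∀ x y : A, C⁻¹ * dist x y ≤ dist (f x) (f y) ∧ dist (f x) (f y) ≤ C * dist x y


namespace DustAux

/-- Hypotheses on the finite set of translation parts. -/
structure Sys (lam : ℝ) (B : Finset ℝ) : Prop where
  pos : 0 < lam
  half : lam ≤ 1 / 2
  zero_mem : (0 : ℝ) ∈ B
  top_mem : 1 - lam ∈ B
  nonneg : ∀ b ∈ B, 0 ≤ b
  le_top : ∀ b ∈ B, b ≤ 1 - lam
  good : ∀ b ∈ B, ∀ c ∈ B, b < c → c - b = lam * (1 - lam) ∨ lam ≤ c - b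

/-- Left endpoints of the level `k` pieces. -/
noncomputable def P (lam : ℝ) (B : Finset ℝ) : ℕ → Finset ℝ
  | 0 => {0}
  | k + 1 => Finset.image₂ (fun b u => b + lam * u) B (P lam B k)

variable {lam : ℝ} {B : Finset ℝ}

lemma mem_P_succ {k : ℕ} {x : ℝ} :
    x ∈ P lam B (k + 1) ↔ ∃ b ∈ B, ∃ u ∈ P lam B k, b + lam * u = x := by
  simp [P, Finset.mem_image₂]

lemma mem_P_zero {x : ℝ} : x ∈ P lam B 0 ↔ x = 0 := by
  simp [P]

lemma zero_mem_P (h : Sys lam B) (k : ℕ) : (0 : ℝ) ∈ P lam B k := by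
  induction k with
  | zero => simp [P]
  | succ k ih => exact mem_P_succ.2 ⟨0, h.zero_mem, 0, ih, by simp⟩

lemma P_nonneg (h : Sys lam B) (k : ℕ) : ∀ u ∈ P lam B k, 0 ≤ u := by
  induction k with
  | zero => intro u hu; rw [mem_P_zero] at hu; simp [hu]
  | succ k ih =>
    intro u hu
    obtain ⟨b, hb, w, hw, rfl⟩ := mem_P_succ.1 hu
    have := h.nonneg b hb
    have := mul_nonneg h.pos.le (ih w hw)
    linarith

lemma P_le (h : Sys lam B) (k : ℕ) : ∀ u ∈ P lam B k, u ≤ 1 - lam ^ k := by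
  induction k with
  | zero => intro u hu; rw [mem_P_zero] at hu; simp [hu]
  | succ k ih =>
    intro u hu
    obtain ⟨b, hb, w, hw, rfl⟩ := mem_P_succ.1 hu
    have := h.le_top b hb
    have := mul_le_mul_of_nonneg_left (ih w hw) h.pos.le
    rw [pow_succ]
    linarith

lemma P_lt (h : Sys lam B) (k : ℕ) : ∀ u ∈ P lam B k, u < 1 := by
  intro u hu
  have := P_le h k u hu
  have := pow_pos h.pos k
  linarith

lemma P_top (h : Sys lam B) (k : ℕ) : ∀ u ∈ P lam B (k + 1), 1 - lam ≤ u →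
    ∃ w ∈ P lam B k, u = 1 - lam + lam * w := by
  induction k with
  | zero =>
    intro u hu hle
    obtain ⟨b, hb, w, hw, rfl⟩ := mem_P_succ.1 hu
    rw [mem_P_zero] at hw
    subst hw
    have := h.le_top b hb
    exact ⟨0, by simp [P], by simp at hle ⊢; linarith⟩
  | succ k ih =>
    intro u hu hle
    obtain ⟨b, hb, w, hw, rfl⟩ := mem_P_succ.1 hu
    have hp := h.pos
    rcases (h.le_top b hb).eq_or_lt with hbt | hbt
    · exact ⟨w, hw, by rw [hbt]⟩
    rcases h.good b hb _ h.top_mem hbt with hg | hg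
    · have hw1 : 1 - lam ≤ w := by
        have : lam * (1 - lam) ≤ lam * w := by linarith
        exact le_of_mul_le_mul_left this hp
      obtain ⟨w', hw', rfl⟩ := ih w hw hw1
      refine ⟨lam * w', mem_P_succ.2 ⟨0, h.zero_mem, w', hw', by simp⟩, ?_⟩
      linear_combination -hg
    · have := P_lt h _ w hw
      have : lam * w < lam * 1 := mul_lt_mul_of_pos_left this hp
      linarith

lemma overlap (h : Sys lam B) {b b' : ℝ} (hbb : b' - b = lam * (1 - lam)) {k : ℕ} {u : ℝ}
    (hu : u ∈ P lam B k) (hle : b' ≤ b + lam * u) :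
    ∃ w ∈ P lam B k, b + lam * u = b' + lam * w := by
  have hp := h.pos
  have hw1 : 1 - lam ≤ u := by
    have : lam * (1 - lam) ≤ lam * u := by linarith
    exact le_of_mul_le_mul_left this hp
  cases k with
  | zero =>
    rw [mem_P_zero] at hu
    subst hu
    linarith [h.half]
  | succ k =>
    obtain ⟨w', hw', rfl⟩ := P_top h k u hu hw1
    refine ⟨lam * w', mem_P_succ.2 ⟨0, h.zero_mem, w', hw', by simp⟩, ?_⟩
    linear_combination -hbb

/-- Good finite sets at scale `η`. -/
def Good (lam η : ℝ) (T : Finset ℝ) : Prop :=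
  ∀ t ∈ T, ∀ t' ∈ T, t < t' → t' - t = η * (1 - lam) ∨ η ≤ t' - t

lemma P_good (h : Sys lam B) (k : ℕ) : Good lam (lam ^ k) (P lam B k) := by
  induction k with
  | zero =>
    intro t ht t' ht' hlt
    rw [mem_P_zero] at ht ht'
    subst ht; subst ht'
    exact absurd hlt (lt_irrefl _)
  | succ k ih =>
    have hp := h.pos
    have hk := pow_pos hp k
    have same : ∀ b : ℝ, ∀ u ∈ P lam B k, ∀ v ∈ P lam B k, b + lam * u < b + lam * v →
        (b + lam * v) - (b + lam * u) = lam ^ (k + 1) * (1 - lam) ∨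
          lam ^ (k + 1) ≤ (b + lam * v) - (b + lam * u) := by
      intro b u hu v hv hlt
      have huv : u < v := by
        have : lam * u < lam * v := by linarith
        exact lt_of_mul_lt_mul_left this hp.le
      rcases ih u hu v hv huv with hg | hg
      · left
        rw [pow_succ]
        linear_combination lam * hg
      · right
        have := mul_le_mul_of_nonneg_left hg hp.le
        rw [pow_succ]
        linarith
    intro t ht t' ht' hlt
    obtain ⟨b, hb, u, hu, rfl⟩ := mem_P_succ.1 ht
    obtain ⟨b', hb', v, hv, rfl⟩ := mem_P_succ.1 ht'
    rcases lt_trichotomy b b' with hbb | hbb | hbb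
    · rcases h.good b hb b' hb' hbb with hg | hg
      · by_cases hc : b' ≤ b + lam * u
        · obtain ⟨w, hw, e⟩ := overlap h hg hu hc
          rw [e] at hlt ⊢
          exact same b' w hw v hv hlt
        · push Not at hc
          cases k with
          | zero =>
            rw [mem_P_zero] at hu hv
            subst hu; subst hv
            left
            simpa using hg
          | succ k =>
            have hmem : 1 - lam ∈ P lam B (k + 1) :=
              mem_P_succ.2 ⟨1 - lam, h.top_mem, 0, zero_mem_P h k, by simp⟩
            have e : b' = b + lam * (1 - lam) := by linarith
            have e' : b' = b' + lam * 0 := by simp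
            have h1 := same b u hu _ hmem (by rw [← e]; exact hc)
            rw [← e] at h1
            rcases (P_nonneg h _ v hv).eq_or_lt with h0 | h0
            · rw [← h0, ← e']
              exact h1
            · have h2 := same b' 0 (zero_mem_P h _) v hv (by
                have := mul_pos hp h0
                linarith)
              have hkk : 0 < lam ^ (k + 1 + 1) := pow_pos hp _
              have hl : lam ^ (k + 1 + 1) / 2 ≤ lam ^ (k + 1 + 1) * (1 - lam) := by
                have := h.half
                nlinarith
              right
              rcases h1 with h1 | h1 <;> rcases h2 with h2 | h2 <;> linarith
      · right
        have := mul_le_mul_of_nonneg_left (P_le h k u hu) hp.le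
        have h2 := mul_nonneg hp.le (P_nonneg h k v hv)
        rw [pow_succ]
        linarith
    · subst hbb
      exact same b u hu v hv hlt
    · rcases h.good b' hb' b hb hbb with hg | hg
      · have h2 := mul_nonneg hp.le (P_nonneg h k u hu)
        obtain ⟨w, hw, e⟩ := overlap h hg hv (by linarith)
        rw [e] at hlt ⊢
        exact same b u hu w hw hlt
      · have h2 := mul_nonneg hp.le (P_nonneg h k u hu)
        have h3 : lam * v < lam * 1 := mul_lt_mul_of_pos_left (P_lt h k v hv) hp
        linarith

lemma mem_P_add (k l : ℕ) : ∀ x : ℝ,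
    x ∈ P lam B (k + l) ↔ ∃ p ∈ P lam B k, ∃ u ∈ P lam B l, p + lam ^ k * u = x := by
  induction k with
  | zero => intro x; simp [P]
  | succ k ih =>
    intro x
    rw [show k + 1 + l = (k + l) + 1 by ring, mem_P_succ]
    constructor
    · rintro ⟨b, hb, w, hw, rfl⟩
      obtain ⟨p, hp, u, hu, rfl⟩ := (ih w).1 hw
      exact ⟨b + lam * p, mem_P_succ.2 ⟨b, hb, p, hp, rfl⟩, u, hu, by ring⟩
    · rintro ⟨p, hp, u, hu, rfl⟩
      obtain ⟨b, hb, q, hq, rfl⟩ := mem_P_succ.1 hp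
      exact ⟨b, hb, q + lam ^ k * u, (ih _).2 ⟨q, hq, u, hu, rfl⟩, by ring⟩

/-- number of overlapping pairs -/
noncomputable def ov (lam η : ℝ) (T : Finset ℝ) : ℕ :=
  (T.filter (fun t => t + η * (1 - lam) ∈ T)).card

lemma card_image_aff {η : ℝ} (hη : 0 < η) (t : ℝ) (S : Finset ℝ) :
    (S.image (fun u => t + η * u)).card = S.card := by
  apply Finset.card_image_of_injective
  intro x y hxy
  simp only [add_right_inj] at hxy
  exact mul_left_cancel₀ hη.ne' hxy

lemma count (h : Sys lam B) {η : ℝ} (hη : 0 < η) (j : ℕ) (T : Finset ℝ) :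
    Good lam η T →
    (Finset.image₂ (fun t u => t + η * u) T (P lam B (j + 1))).card +
      ov lam η T * (P lam B j).card = T.card * (P lam B (j + 1)).card := by
  induction T using Finset.induction_on_max with
  | empty => intro _; simp [ov]
  | insert t T hmax ih =>
    intro hg
    have hp := h.pos
    have hh := h.half
    have hη' : 0 < η * (1 - lam) := mul_pos hη (by linarith)
    have htT : t ∉ T := fun hc => lt_irrefl _ (hmax t hc)
    have hgT : Good lam η T := fun s hs s' hs' hlt =>
      hg s (Finset.mem_insert_of_mem hs) s' (Finset.mem_insert_of_mem hs') hlt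
    have ih := ih hgT
    have hinter : ∀ x, x ∈ (P lam B (j + 1)).image (fun u => t + η * u) ∩
        Finset.image₂ (fun t u => t + η * u) T (P lam B (j + 1)) ↔
        (t - η * (1 - lam) ∈ T ∧ x ∈ (P lam B j).image (fun u => t + (η * lam) * u)) := by
      intro x
      simp only [Finset.mem_inter, Finset.mem_image, Finset.mem_image₂]
      constructor
      · rintro ⟨⟨u, hu, rfl⟩, s, hs, v, hv, e⟩
        have hlt := hmax s hs
        have hu0 := mul_nonneg hη.le (P_nonneg h _ u hu)
        rcases hg s (Finset.mem_insert_of_mem hs) t (Finset.mem_insert_self _ _) hlt with h1 | h1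
        · have e1 : t - η * (1 - lam) = s := by linarith
          refine ⟨by rwa [e1], ?_⟩
          have hv1 : 1 - lam ≤ v := by
            have : η * (1 - lam) ≤ η * v := by linarith
            exact le_of_mul_le_mul_left this hη
          obtain ⟨w, hw, rfl⟩ := P_top h j v hv hv1
          exact ⟨w, hw, by rw [← e]; linear_combination h1⟩
        · have h3 : η * v < η * 1 := mul_lt_mul_of_pos_left (P_lt h _ v hv) hη
          linarith
      · rintro ⟨hs, w, hw, rfl⟩
        refine ⟨⟨lam * w, mem_P_succ.2 ⟨0, h.zero_mem, w, hw, by simp⟩, by ring⟩, _, hs,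
          1 - lam + lam * w, mem_P_succ.2 ⟨_, h.top_mem, w, hw, rfl⟩, by ring⟩
    have hcu := Finset.card_union_add_card_inter ((P lam B (j + 1)).image (fun u => t + η * u))
      (Finset.image₂ (fun t u => t + η * u) T (P lam B (j + 1)))
    rw [card_image_aff hη] at hcu
    rw [Finset.image₂_insert_left, Finset.card_insert_of_notMem htT]
    by_cases hc : t - η * (1 - lam) ∈ T
    · have e1 : (P lam B (j + 1)).image (fun u => t + η * u) ∩
        Finset.image₂ (fun t u => t + η * u) T (P lam B (j + 1)) =
          (P lam B j).image (fun u => t + (η * lam) * u) := by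
        ext x
        rw [hinter x]
        simp [hc]
      rw [e1, card_image_aff (mul_pos hη hp)] at hcu
      have e2 : ov lam η (insert t T) = ov lam η T + 1 := by
        unfold ov
        rw [← Finset.card_insert_of_notMem (s := T.filter (fun t => t + η * (1 - lam) ∈ T))
          (a := t - η * (1 - lam)) (by simp [htT])]
        congr 1
        ext x
        simp only [Finset.mem_filter, Finset.mem_insert]
        constructor
        · rintro ⟨h1 | h1, h2 | h2⟩
          · linarith
          · have := hmax _ h2
            linarith
          · left; linarith
          · right; exact ⟨h1, h2⟩
        · rintro (h1 | ⟨h1, h2⟩)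
          · subst h1
            exact ⟨Or.inr hc, Or.inl (by ring)⟩
          · exact ⟨Or.inr h1, Or.inr h2⟩
      rw [e2]
      linarith
    · have e1 : (P lam B (j + 1)).image (fun u => t + η * u) ∩
        Finset.image₂ (fun t u => t + η * u) T (P lam B (j + 1)) = ∅ := by
        ext x
        rw [hinter x]
        simp [hc]
      rw [e1] at hcu
      have e2 : ov lam η (insert t T) = ov lam η T := by
        unfold ov
        congr 1
        ext x
        simp only [Finset.mem_filter, Finset.mem_insert]
        constructor
        · rintro ⟨h1 | h1, h2 | h2⟩
          · linarith
          · have := hmax _ h2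
            linarith
          · exfalso
            apply hc
            rw [← h2]
            simpa using h1
          · exact ⟨h1, h2⟩
        · rintro ⟨h1, h2⟩
          exact ⟨Or.inr h1, Or.inr h2⟩
      rw [e2]
      simp only [Finset.card_empty, add_zero] at hcu
      linarith

lemma ov_le (η : ℝ) (T : Finset ℝ) : ov lam η T ≤ T.card := Finset.card_filter_le _ _

lemma P_rec (h : Sys lam B) (j : ℕ) :
    (P lam B (j + 2)).card + ov lam lam B * (P lam B j).card = B.card * (P lam B (j + 1)).card :=
  count h h.pos j B h.good

lemma card_P (h : Sys lam B) {α β : ℝ} (hs : α + β = B.card) (hm : α * β = ov lam lam B)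
    (j : ℕ) : ((P lam B j).card : ℝ) * (α - β) = α ^ (j + 1) - β ^ (j + 1) := by
  induction j using Nat.strong_induction_on with
  | _ j ih =>
    match j with
    | 0 => simp [P]
    | 1 =>
      have : (P lam B 1).card = B.card := by
        simp [P, Finset.image₂_singleton_right]
      rw [this, ← hs]; ring
    | j + 2 =>
      have h1 := ih j (by omega)
      have h2 := ih (j + 1) (by omega)
      have h3 : ((P lam B (j + 2)).card : ℝ) + ov lam lam B * (P lam B j).card
        = B.card * (P lam B (j + 1)).card := by exact_mod_cast P_rec h j
      rw [← hs, ← hm] at h3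
      linear_combination (α - β) * h3 + (α + β) * h2 - α * β * h1

lemma tendsto_card_P (h : Sys lam B) {α β : ℝ} (hs : α + β = B.card)
    (hm : α * β = ov lam lam B) (hβ0 : 0 < β) (hβ : β < 1) (hα : 1 < α) :
    Filter.Tendsto (fun j => ((P lam B j).card : ℝ) / α ^ j) Filter.atTop
      (nhds (α / (α - β))) := by
  have hne : α - β ≠ 0 := by linarith
  have e : (fun j => ((P lam B j).card : ℝ) / α ^ j) =
      fun j => α / (α - β) - β / (α - β) * (β / α) ^ j := by
    funext j
    have h1 := card_P h hs hm j
    have hα0 : α ^ j ≠ 0 := pow_ne_zero _ (by linarith)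
    rw [div_pow]
    field_simp
    rw [pow_succ, pow_succ] at h1
    linear_combination h1
  rw [e]
  have : Filter.Tendsto (fun j : ℕ => (β / α) ^ j) Filter.atTop (nhds 0) := by
    apply tendsto_pow_atTop_nhds_zero_of_lt_one (by positivity)
    rw [div_lt_one (by linarith)]
    linarith
  have := (this.const_mul (β / (α - β))).const_sub (α / (α - β))
  simpa using this

end DustAux

namespace DustAux

variable {lam : ℝ} {B : Finset ℝ}

/-- Attractor hypotheses. -/
structure Att (lam : ℝ) (B : Finset ℝ) (E : Set ℝ) : Prop where
  zero_mem : (0 : ℝ) ∈ E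
  nonneg : ∀ x ∈ E, 0 ≤ x
  le_one : ∀ x ∈ E, x ≤ 1
  eq : ∀ x, x ∈ E ↔ ∃ b ∈ B, ∃ y ∈ E, b + lam * y = x

variable {E : Set ℝ}

lemma E_decomp (hE : Att lam B E) (k : ℕ) : ∀ x,
    x ∈ E ↔ ∃ p ∈ P lam B k, ∃ y ∈ E, p + lam ^ k * y = x := by
  induction k with
  | zero => intro x; simp [P]
  | succ k ih =>
    intro x
    rw [hE.eq]
    constructor
    · rintro ⟨b, hb, w, hw, rfl⟩
      obtain ⟨p, hp, u, hu, rfl⟩ := (ih w).1 hw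
      exact ⟨b + lam * p, mem_P_succ.2 ⟨b, hb, p, hp, rfl⟩, u, hu, by ring⟩
    · rintro ⟨p, hp, u, hu, rfl⟩
      obtain ⟨b, hb, q, hq, rfl⟩ := mem_P_succ.1 hp
      exact ⟨b, hb, q + lam ^ k * u, (ih _).2 ⟨q, hq, u, hu, rfl⟩, by ring⟩

lemma P_sub_E (hE : Att lam B E) (k : ℕ) : ∀ x ∈ P lam B k, x ∈ E := fun x hx =>
  (E_decomp hE k x).2 ⟨x, hx, 0, hE.zero_mem, by simp⟩

open Classical in
/-- number of level `q` points in `A` -/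
noncomputable def cnt (lam : ℝ) (B : Finset ℝ) (A : Set ℝ) (q : ℕ) : ℕ :=
  ((P lam B q).filter (fun x => x ∈ A)).card

/-- the asymptotic mass of `A` is `v` -/
def HasVal (lam : ℝ) (B : Finset ℝ) (α : ℝ) (A : Set ℝ) (v : ℝ) : Prop :=
  Filter.Tendsto (fun q => (cnt lam B A q : ℝ) / α ^ q) Filter.atTop (nhds v)

lemma card_le_of_sep {T : Finset ℝ} {g L : ℝ} (hg : 0 < g) {N : ℕ} (hN : L / g + 1 ≤ N)
    (hsep : ∀ s ∈ T, ∀ t ∈ T, s < t → g ≤ t - s) (hL : ∀ s ∈ T, ∀ t ∈ T, t - s ≤ L) :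
    T.card ≤ N := by
  rcases T.eq_empty_or_nonempty with rfl | hne
  · simp
  set a := T.min' hne with ha
  have haT : a ∈ T := Finset.min'_mem _ _
  have hle : ∀ t ∈ T, 0 ≤ (t - a) / g := fun t ht =>
    div_nonneg (sub_nonneg.2 (Finset.min'_le _ _ ht)) hg.le
  have := Finset.card_le_card_of_injOn (s := T) (t := Finset.range N)
    (fun t => ⌊(t - a) / g⌋₊) ?_ ?_
  · simpa using this
  · intro t ht
    simp only [Finset.coe_range, Set.mem_Iio]
    rw [Nat.floor_lt (hle t ht)]
    have : (t - a) / g ≤ L / g := by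
      gcongr
      exact hL a haT t ht
    linarith
  · have key : ∀ s ∈ T, ∀ t ∈ T, ⌊(s - a) / g⌋₊ = ⌊(t - a) / g⌋₊ → ¬ s < t := by
      intro s hs t ht hst hlt
      have h1 := hsep s hs t ht hlt
      have h2 := Nat.floor_le (hle s hs)
      have h3 := Nat.lt_floor_add_one ((t - a) / g)
      rw [← hst] at h3
      have h4 : (t - a) / g - (s - a) / g < 1 := by linarith
      rw [← sub_div, div_lt_one hg] at h4
      linarith
    intro s hs t ht hst
    rcases lt_trichotomy s t with h | h | h
    · exact absurd h (key s hs t ht hst)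
    · exact h
    · exact absurd h (key t ht s hs hst.symm)

lemma hasVal_piece (h : Sys lam B) (hE : Att lam B E) {α β : ℝ} (hs : α + β = B.card)
    (hm : α * β = ov lam lam B) (hβ0 : 0 < β) (hβ : β < 1) (hα : 1 < α)
    {A : Set ℝ} (hAE : A ⊆ E) (hne : A.Nonempty) {d K : ℝ} {k N : ℕ}
    (hk : lam ^ k < d) (hk' : lam * d ≤ lam ^ k)
    (hsep : ∀ x ∈ A, ∀ y ∈ E, y ∉ A → d ≤ |x - y|)
    (hK : 0 ≤ K) (hdiam : ∀ x ∈ A, ∀ y ∈ A, |x - y| ≤ K * d)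
    (hN : K / (lam * (1 - lam)) + 1 ≤ N) :
    ∃ i j : ℕ, 1 ≤ i ∧ i ≤ N ∧ j ≤ i ∧
      HasVal lam B α A (((i : ℝ) - j / α) * (α / (α - β)) / α ^ k) := by
  classical
  have hp := h.pos
  have hh := h.half
  have hkp : 0 < lam ^ k := pow_pos hp k
  set T := (P lam B k).filter (fun x => x ∈ A) with hT
  have hclose : ∀ x ∈ E, ∀ y ∈ E, |x - y| ≤ lam ^ k → x ∈ A → y ∈ A := by
    intro x hx y hy hxy hxA
    by_contra hyA
    have := hsep x hxA y hy hyA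
    linarith
  have hgood : Good lam (lam ^ k) T := fun s hs t ht hlt =>
    P_good h k s (Finset.mem_filter.1 hs).1 t (Finset.mem_filter.1 ht).1 hlt
  have hTne : 1 ≤ T.card := by
    obtain ⟨x, hx⟩ := hne
    obtain ⟨p, hp1, y, hy, rfl⟩ := (E_decomp hE k x).1 (hAE hx)
    refine Finset.card_pos.2 ⟨p, Finset.mem_filter.2 ⟨hp1, ?_⟩⟩
    refine hclose _ (hAE hx) _ (P_sub_E hE k p hp1) ?_ hx
    rw [add_sub_cancel_left, abs_of_nonneg (mul_nonneg hkp.le (hE.nonneg y hy))]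
    exact mul_le_of_le_one_right hkp.le (hE.le_one y hy)
  have hTN : T.card ≤ N := by
    refine card_le_of_sep (g := lam ^ k * (1 - lam)) (L := K * d)
      (mul_pos hkp (by linarith)) ?_ ?_ ?_
    · refine le_trans ?_ hN
      gcongr ?_ + 1
      rw [div_le_div_iff₀ (mul_pos hkp (by linarith)) (mul_pos hp (by linarith))]
      have h1 : 0 ≤ 1 - lam := by linarith
      have := mul_le_mul_of_nonneg_left hk' (mul_nonneg hK h1)
      nlinarith
    · intro s hs t ht hlt
      rcases hgood s hs t ht hlt with h1 | h1
      · exact h1.ge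
      · refine le_trans ?_ h1
        exact mul_le_of_le_one_right hkp.le (by linarith)
    · intro s hs t ht
      exact (le_abs_self _).trans (hdiam t (Finset.mem_filter.1 ht).2 s (Finset.mem_filter.1 hs).2)
  refine ⟨T.card, ov lam (lam ^ k) T, hTne, hTN, ov_le _ _, ?_⟩
  have hcount : ∀ l, cnt lam B A (l + (k + 1)) + ov lam (lam ^ k) T * (P lam B l).card
      = T.card * (P lam B (l + 1)).card := by
    intro l
    rw [← count h hkp l T hgood]
    congr 1
    unfold cnt
    congr 1
    ext x
    rw [show l + (k + 1) = k + (l + 1) by ring]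
    simp only [Finset.mem_filter, Finset.mem_image₂]
    rw [mem_P_add]
    have key : ∀ p ∈ P lam B k, ∀ u ∈ P lam B (l + 1), (p + lam ^ k * u ∈ A ↔ p ∈ A) := by
      intro p hp1 u hu
      have hx : p + lam ^ k * u ∈ E :=
        (E_decomp hE k _).2 ⟨p, hp1, u, P_sub_E hE _ u hu, rfl⟩
      have hpE := P_sub_E hE k p hp1
      have hd : |p + lam ^ k * u - p| ≤ lam ^ k := by
        rw [add_sub_cancel_left, abs_of_nonneg (mul_nonneg hkp.le (P_nonneg h _ u hu))]
        exact mul_le_of_le_one_right hkp.le (P_lt h _ u hu).le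
      exact ⟨hclose _ hx _ hpE hd, hclose _ hpE _ hx (by rwa [abs_sub_comm])⟩
    constructor
    · rintro ⟨⟨p, hp1, u, hu, rfl⟩, hxA⟩
      exact ⟨p, Finset.mem_filter.2 ⟨hp1, (key p hp1 u hu).1 hxA⟩, u, hu, rfl⟩
    · rintro ⟨p, hpT, u, hu, rfl⟩
      obtain ⟨hp1, hpA⟩ := Finset.mem_filter.1 hpT
      exact ⟨⟨p, hp1, u, hu, rfl⟩, (key p hp1 u hu).2 hpA⟩
  unfold HasVal
  rw [← Filter.tendsto_add_atTop_iff_nat (k + 1)]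
  have hlim := tendsto_card_P h hs hm hβ0 hβ hα
  have hlim1 := (Filter.tendsto_add_atTop_iff_nat 1).2 hlim
  have := ((hlim1.const_mul (T.card : ℝ)).sub
    (hlim.const_mul ((ov lam (lam ^ k) T : ℝ) / α))).div_const (α ^ k)
  have hα0 : α ≠ 0 := by linarith
  convert this using 1
  · funext l
    have hc : (cnt lam B A (l + (k + 1)) : ℝ) + ov lam (lam ^ k) T * (P lam B l).card
      = T.card * (P lam B (l + 1)).card := by exact_mod_cast hcount l
    rw [eq_sub_of_add_eq hc, pow_add, pow_succ α l, pow_succ α k]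
    field_simp
  · congr 1
    ring

lemma hasVal_unique {α : ℝ} {A : Set ℝ} {v w : ℝ} (h1 : HasVal lam B α A v)
    (h2 : HasVal lam B α A w) : v = w := tendsto_nhds_unique h1 h2

lemma hasVal_sum {α : ℝ} {t : ℕ} {A : Set ℝ} {A' : Fin t → Set ℝ} {v : Fin t → ℝ}
    (hv : ∀ j, HasVal lam B α (A' j) (v j)) (hA : A = ⋃ j, A' j)
    (hd : ∀ i j, i ≠ j → Disjoint (A' i) (A' j)) : HasVal lam B α A (∑ j, v j) := by
  classical
  have := tendsto_finsetSum Finset.univ (fun j _ => hv j)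
  unfold HasVal
  convert this using 2 with q
  rw [← Finset.sum_div]
  congr 1
  have : cnt lam B A q = ∑ j, cnt lam B (A' j) q := by
    unfold cnt
    rw [← Finset.card_biUnion]
    · congr 1
      ext x
      simp [hA]
    · intro i _ j _ hij
      rw [Function.onFun, Finset.disjoint_left]
      intro x hx hx'
      exact Set.disjoint_left.1 (hd i j hij) (Finset.mem_filter.1 hx).2 (Finset.mem_filter.1 hx').2
  rw [this]
  push_cast
  rfl

end DustAux

namespace DustAux

lemma final_alg (n m : ℕ) {α β : ℝ} (hs : α + β = n) (hm : α * β = m)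
    (hβ0 : 0 < β) (hβ : β < 1) (hα : 1 < α) {t : ℕ} (ht : 2 ≤ t) (x : Fin t → ℝ)
    (hx0 : ∀ j, 0 < x j) (hx : ∑ j, x j = 1)
    (hr : ∀ j, ∃ p z : ℕ, 1 ≤ p ∧ 1 ≤ z ∧ x j ^ p * α ^ z = 1) :
    ∃ k : ℕ, 2 ≤ k ∧
      ¬ Irreducible (X ^ (2 * k) - C (n : ℤ) * X ^ k + C (m : ℤ)) := by
  choose p z hp hz hpz using hr
  have hprod : 0 < ∏ j, p j := Finset.prod_pos (fun j _ => hp j)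
  set k := 2 * ∏ j, p j with hk
  have hk2 : 2 ≤ k := by omega
  have hk0 : k ≠ 0 := by omega
  refine ⟨k, hk2, fun hirr => ?_⟩
  have hdvd : ∀ j, p j ∣ k := fun j =>
    Dvd.dvd.mul_left (Finset.dvd_prod_of_mem p (Finset.mem_univ j)) 2
  choose q hq using hdvd
  obtain ⟨y, hy0, hy⟩ : ∃ y : ℝ, 0 < y ∧ y ^ k = α :=
    ⟨α ^ ((k : ℝ)⁻¹), Real.rpow_pos_of_pos (by linarith) _,
      Real.rpow_inv_natCast_pow (by linarith) hk0⟩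
  obtain ⟨y', hy0', hy'⟩ : ∃ y : ℝ, 0 < y ∧ y ^ k = β :=
    ⟨β ^ ((k : ℝ)⁻¹), Real.rpow_pos_of_pos (by linarith) _,
      Real.rpow_inv_natCast_pow (by linarith) hk0⟩
  have hy1' : y' < 1 := by
    by_contra hc
    push Not at hc
    have := one_le_pow₀ hc (n := k)
    linarith
  set e : Fin t → ℕ := fun j => q j * z j with he
  have hxe : ∀ j, x j * y ^ e j = 1 := by
    intro j
    have h1 : (x j * y ^ e j) ^ p j = 1 := by
      rw [mul_pow, ← pow_mul, he]
      simp only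
      rw [show q j * z j * p j = k * z j by rw [hq j]; ring, pow_mul, hy]
      exact hpz j
    exact (pow_eq_one_iff_of_nonneg (mul_nonneg (hx0 j).le (by positivity))
      (by have := hp j; omega)).1 h1
  set N := ∑ j, e j with hN
  have heN : ∀ j, e j ≤ N := fun j => Finset.single_le_sum (fun _ _ => Nat.zero_le _)
    (Finset.mem_univ j)
  set Q : ℤ[X] := X ^ N - ∑ j, X ^ (N - e j) with hQ
  have hQy : aeval y Q = 0 := by
    rw [hQ]
    simp only [map_sub, map_pow, aeval_X, map_sum]
    have : ∀ j, y ^ (N - e j) = y ^ N * x j := by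
      intro j
      have h1 : y ^ N = y ^ (N - e j) * y ^ e j := by rw [← pow_add, Nat.sub_add_cancel (heN j)]
      rw [h1, mul_assoc, mul_comm _ (x j), hxe j, mul_one]
    simp only [this]
    rw [← Finset.mul_sum, hx]; ring
  set R : ℤ[X] := X ^ (2 * k) - C (n : ℤ) * X ^ k + C (m : ℤ) with hR
  have hRe : ∀ w : ℝ, aeval w R = (w ^ k) ^ 2 - n * w ^ k + m := by
    intro w
    rw [hR]
    simp [pow_mul, mul_comm 2 k]
  have hRy : aeval y R = 0 := by
    rw [hRe, hy, ← hs, ← hm]; ring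
  have hRy' : aeval y' R = 0 := by
    rw [hRe, hy', ← hs, ← hm]; ring
  have hRm : R.Monic := by
    rw [hR]
    have e : (X ^ (2 * k) - C (n : ℤ) * X ^ k + C (m : ℤ) : ℤ[X]) =
        X ^ (2 * k) + (-(C (n : ℤ) * X ^ k) + C (m : ℤ)) := by ring
    rw [e]
    apply monic_X_pow_add
    refine lt_of_le_of_lt (degree_add_le _ _) (max_lt ?_ ?_)
    · rw [degree_neg]
      refine lt_of_le_of_lt (degree_C_mul_X_pow_le _ _) ?_
      exact_mod_cast (by omega : k < 2 * k)
    · refine lt_of_le_of_lt degree_C_le ?_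
      exact_mod_cast (by omega : 0 < 2 * k)
  have hint : IsIntegral ℤ y := ⟨R, hRm, by simpa [aeval_def] using hRy⟩
  have h1 : minpoly ℤ y ∣ Q := minpoly.isIntegrallyClosed_dvd hint hQy
  have h2 : minpoly ℤ y ∣ R := minpoly.isIntegrallyClosed_dvd hint hRy
  have h3 : R ∣ minpoly ℤ y := by
    rcases hirr.dvd_iff.1 h2 with h | h
    · exact absurd h (minpoly.not_isUnit ℤ y)
    · exact h.dvd
  have hQy' : aeval y' Q = 0 := by
    obtain ⟨S, hS⟩ := h3.trans h1
    rw [hS, map_mul, hRy', zero_mul]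
  rw [hQ] at hQy'
  simp only [map_sub, map_pow, aeval_X, map_sum] at hQy'
  have hlow : ∀ j, y' ^ N ≤ y' ^ (N - e j) := fun j =>
    pow_le_pow_of_le_one hy0'.le hy1'.le (Nat.sub_le _ _)
  have := Finset.sum_le_sum (s := Finset.univ) (fun j _ => hlow j)
  simp only [Finset.sum_const, Finset.card_univ, Fintype.card_fin, nsmul_eq_mul] at this
  have hyN : 0 < y' ^ N := by positivity
  have : (2 : ℝ) * y' ^ N ≤ t * y' ^ N := mul_le_mul_of_nonneg_right (by exact_mod_cast ht) hyN.le
  linarith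

end DustAux

namespace DustAux

lemma abstract_main {t : ℕ} (r : Fin t → ℝ) (hr0 : ∀ j, 0 < r j) (hr1 : ∀ j, r j < 1)
    {lam α κ : ℝ} (hl0 : 0 < lam) (hl1 : lam < 1) (hα : 1 < α) (hκ : 0 < κ)
    (ρ v a : List (Fin t) → ℝ) (k : List (Fin t) → ℕ) (S : Finset ℝ)
    (hρ0 : ρ [] = 1) (hρ : ∀ j w, ρ (j :: w) = ρ w * r j)
    (hS : ∀ y ∈ S, 0 < y) (ha : ∀ w, a w ∈ S) (hv : ∀ w, v w = a w / α ^ k w)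
    (hk : ∀ w, lam ^ k w < κ * ρ w) (hk' : ∀ w, lam * (κ * ρ w) ≤ lam ^ k w)
    (hadd : ∀ w, v w = ∑ j, v (j :: w)) :
    ∃ x : Fin t → ℝ, (∀ j, 0 < x j) ∧ ∑ j, x j = 1 ∧
      ∀ j, ∃ p z : ℕ, 1 ≤ p ∧ 1 ≤ z ∧ x j ^ p * α ^ z = 1 := by
  classical
  have hα0 : 0 < α := by linarith
  have hρpos : ∀ w, 0 < ρ w := by
    intro w
    induction w with
    | nil => rw [hρ0]; exact one_pos
    | cons j w ih => rw [hρ]; exact mul_pos ih (hr0 j)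
  obtain ⟨s, hs0, hs⟩ : ∃ s : ℝ, 0 < s ∧ lam ^ s = α⁻¹ := by
    have hll := Real.log_neg hl0 hl1
    refine ⟨-Real.log α / Real.log lam, div_pos_of_neg_of_neg (by
      have := Real.log_pos hα; linarith) hll, ?_⟩
    rw [Real.rpow_def_of_pos hl0, mul_div_cancel₀ _ hll.ne, Real.exp_neg, Real.exp_log hα0]
  have hks : ∀ i : ℕ, (lam ^ i) ^ s = (α ^ i)⁻¹ := by
    intro i
    rw [← Real.rpow_natCast, ← Real.rpow_mul hl0.le, mul_comm, Real.rpow_mul hl0.le, hs,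
      Real.rpow_natCast, inv_pow]
  set x : Fin t → ℝ := fun j => r j ^ s with hx
  have hx0 : ∀ j, 0 < x j := fun j => Real.rpow_pos_of_pos (hr0 j) _
  have hx1 : ∀ j, x j < 1 := fun j => Real.rpow_lt_one (hr0 j).le (hr1 j) hs0
  set τ : List (Fin t) → ℝ := fun w => ρ w ^ s with hτ
  have hτ0 : ∀ w, 0 < τ w := fun w => Real.rpow_pos_of_pos (hρpos w) _
  have hτc : ∀ j w, τ (j :: w) = τ w * x j := by
    intro j w
    simp only [hτ, hx]
    rw [hρ, Real.mul_rpow (hρpos w).le (hr0 j).le]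
  have hτnil : τ [] = 1 := by simp [hτ, hρ0]
  set D := κ ^ s with hD
  have hD0 : 0 < D := Real.rpow_pos_of_pos hκ _
  have hup : ∀ w, (α ^ k w)⁻¹ ≤ D * τ w := by
    intro w
    rw [← hks, hD, hτ]
    simp only
    rw [← Real.mul_rpow hκ.le (hρpos w).le]
    exact Real.rpow_le_rpow (by positivity) (hk w).le hs0.le
  have hlow : ∀ w, α⁻¹ * D * τ w ≤ (α ^ k w)⁻¹ := by
    intro w
    rw [← hks, hD, hτ, ← hs, mul_assoc]
    simp only
    rw [← Real.mul_rpow hκ.le (hρpos w).le, ← Real.mul_rpow hl0.le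
      (mul_nonneg hκ.le (hρpos w).le)]
    exact Real.rpow_le_rpow (by have := hρpos w; positivity) (hk' w) hs0.le
  have hSne : S.Nonempty := ⟨a [], ha []⟩
  have hamin : ∀ w, S.min' hSne ≤ a w := fun w => Finset.min'_le _ _ (ha w)
  have hamax : ∀ w, a w ≤ S.max' hSne := fun w => Finset.le_max' _ _ (ha w)
  have hmin0 : 0 < S.min' hSne := hS _ (Finset.min'_mem _ _)
  have hmax0 : 0 < S.max' hSne := hS _ (Finset.max'_mem _ _)
  have ha0 : ∀ w, 0 < a w := fun w => hS _ (ha w)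
  have hv0 : ∀ w, 0 < v w := fun w => by rw [hv]; exact div_pos (ha0 w) (by positivity)
  obtain ⟨c₁, hc₁, hv1⟩ : ∃ c : ℝ, 0 < c ∧ ∀ w, c * τ w ≤ v w := by
    refine ⟨S.min' hSne * (α⁻¹ * D), by positivity, fun w => ?_⟩
    rw [hv, div_eq_mul_inv, mul_assoc]
    exact mul_le_mul (hamin w) (hlow w) (by have := hτ0 w; positivity) (ha0 w).le
  obtain ⟨c₂, hc₂, hv2⟩ : ∃ c : ℝ, 0 < c ∧ ∀ w, v w ≤ c * τ w := by
    refine ⟨S.max' hSne * D, by positivity, fun w => ?_⟩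
    rw [hv, div_eq_mul_inv, mul_assoc]
    exact mul_le_mul (hamax w) (hup w) (by positivity) hmax0.le
  -- the sum equals one
  set σ := ∑ j, x j with hσ
  have hσ0 : 0 ≤ σ := Finset.sum_nonneg (fun j _ => (hx0 j).le)
  have hU : ∀ L : ℕ, ∀ w, v w ≤ c₂ * τ w * σ ^ L := by
    intro L
    induction L with
    | zero => intro w; simpa using hv2 w
    | succ L ih =>
      intro w
      rw [hadd w]
      calc ∑ j, v (j :: w) ≤ ∑ j, c₂ * τ (j :: w) * σ ^ L := Finset.sum_le_sum (fun j _ => ih _)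
        _ = ∑ j, (c₂ * τ w * σ ^ L) * x j := by
          refine Finset.sum_congr rfl (fun j _ => ?_)
          rw [hτc]; ring
        _ = c₂ * τ w * σ ^ (L + 1) := by rw [← Finset.mul_sum, ← hσ, pow_succ]; ring
  have hL : ∀ L : ℕ, ∀ w, c₁ * τ w * σ ^ L ≤ v w := by
    intro L
    induction L with
    | zero => intro w; simpa using hv1 w
    | succ L ih =>
      intro w
      rw [hadd w]
      calc c₁ * τ w * σ ^ (L + 1) = ∑ j, (c₁ * τ w * σ ^ L) * x j := by
            rw [← Finset.mul_sum, ← hσ, pow_succ]; ring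
        _ = ∑ j, c₁ * τ (j :: w) * σ ^ L := by
          refine Finset.sum_congr rfl (fun j _ => ?_)
          rw [hτc]; ring
        _ ≤ ∑ j, v (j :: w) := Finset.sum_le_sum (fun j _ => ih _)
  have hσ1 : σ = 1 := by
    rcases lt_trichotomy σ 1 with hlt | heq | hgt
    · exfalso
      obtain ⟨L, hLL⟩ := exists_pow_lt_of_lt_one (div_pos (hv0 []) hc₂) hlt
      have := hU L []
      rw [hτnil, mul_one] at this
      rw [lt_div_iff₀ hc₂] at hLL
      linarith
    · exact heq
    · exfalso
      obtain ⟨L, hLL⟩ := pow_unbounded_of_one_lt (v [] / c₁) hgt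
      have := hL L []
      rw [hτnil, mul_one] at this
      rw [div_lt_iff₀ hc₁] at hLL
      linarith
  refine ⟨x, hx0, hσ1, ?_⟩
  -- ratios
  set R : List (Fin t) → ℝ := fun w => τ w / v w with hR
  have hR0 : ∀ w, 0 < R w := fun w => div_pos (hτ0 w) (hv0 w)
  have hΔ : ∀ j, ∃ Δ : ℕ, lam ^ Δ < lam * r j := fun j =>
    exists_pow_lt_of_lt_one (mul_pos hl0 (hr0 j)) hl1
  choose Δ hΔ using hΔ
  set Q : Set ℝ := ⋃ j, (((S ×ˢ S) ×ˢ Finset.range (Δ j)).image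
    (fun q : (ℝ × ℝ) × ℕ => x j * (q.1.1 / q.1.2) * α ^ q.2) : Finset ℝ) with hQ
  have hQf : Q.Finite := Set.finite_iUnion (fun j => Finset.finite_toSet _)
  have hQm : ∀ j w, R (j :: w) / R w ∈ Q := by
    intro j w
    have h1 := hk w
    have h2 := hk' w
    have h3 := hk (j :: w)
    have h4 := hk' (j :: w)
    rw [hρ] at h3 h4
    have hw := mul_pos hκ (hρpos w)
    have hkk : k w ≤ k (j :: w) := by
      have : lam ^ k (j :: w) * lam < lam ^ k w := by
        have : κ * (ρ w * r j) < κ * ρ w := by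
          rw [← mul_assoc]
          exact mul_lt_of_lt_one_right hw (hr1 j)
        nlinarith
      rw [← pow_succ] at this
      have := (pow_lt_pow_iff_right_of_lt_one₀ hl0 hl1).1 this
      omega
    obtain ⟨δ, hδ⟩ := Nat.exists_eq_add_of_le hkk
    have hδΔ : δ < Δ j := by
      rw [hδ, pow_add] at h4
      have h5 : lam ^ k w * (lam * r j) < lam ^ k w * lam ^ δ := by
        refine lt_of_lt_of_le ?_ h4
        have := mul_lt_mul_of_pos_right h1 (mul_pos hl0 (hr0 j))
        linarith
      have h6 := lt_of_mul_lt_mul_left h5 (by positivity)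
      exact (pow_lt_pow_iff_right_of_lt_one₀ hl0 hl1).1 ((hΔ j).trans h6)
    rw [hQ, Set.mem_iUnion]
    refine ⟨j, Finset.mem_coe.2 (Finset.mem_image.2 ⟨((a w, a (j :: w)), δ), ?_, ?_⟩)⟩
    · simp [ha, hδΔ]
    · simp only [hR]
      rw [hτc, hv w, hv (j :: w), hδ, pow_add]
      have := (hτ0 w).ne'
      have := (ha0 w).ne'
      have := (ha0 (j :: w)).ne'
      field_simp
  obtain ⟨θ, hθ1, hθ⟩ : ∃ θ : ℝ, 1 < θ ∧ ∀ y ∈ Q, 1 < y → θ ≤ y := by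
    set Z := insert (2 : ℝ) (hQf.toFinset.filter (fun y => 1 < y)) with hZ
    have hZne : Z.Nonempty := Finset.insert_nonempty _ _
    refine ⟨Z.min' hZne, ?_, fun y hy h1 => Finset.min'_le _ _ ?_⟩
    · have := Finset.min'_mem Z hZne
      rcases Finset.mem_insert.1 this with h | h
      · rw [h]; norm_num
      · exact (Finset.mem_filter.1 h).2
    · rw [hZ, Finset.mem_insert, Finset.mem_filter]
      exact Or.inr ⟨hQf.mem_toFinset.2 hy, h1⟩
  have hbdd : BddAbove (Set.range R) := by
    refine ⟨1 / c₁, ?_⟩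
    rintro _ ⟨w, rfl⟩
    simp only [hR]
    rw [div_le_div_iff₀ (hv0 w) hc₁]
    linarith [hv1 w]
  set M := ⨆ w, R w with hM
  have hRM : ∀ w, R w ≤ M := fun w => le_ciSup hbdd w
  have hM0 : 0 < M := (hR0 []).trans_le (hRM [])
  obtain ⟨w₀, hw₀⟩ : ∃ w, M / θ < R w :=
    exists_lt_of_lt_ciSup (div_lt_self hM0 hθ1)
  have hw₀' : M < R w₀ * θ := by rwa [div_lt_iff₀ (by linarith)] at hw₀
  have hconst : ∀ w, R w = R w₀ → ∀ j, R (j :: w) = R w₀ := by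
    intro w hw
    have hle : ∀ j, R (j :: w) ≤ R w := by
      intro j
      by_contra hc
      push Not at hc
      have h1 : 1 < R (j :: w) / R w := (one_lt_div (hR0 w)).2 hc
      have h2 := hθ _ (hQm j w) h1
      rw [le_div_iff₀ (hR0 w), hw] at h2
      have := hRM (j :: w)
      linarith
    have hle2 : ∀ j ∈ Finset.univ, τ w * x j ≤ R w * v (j :: w) := by
      intro j _
      have := hle j
      rw [hR] at this
      simp only at this
      rw [div_le_iff₀ (hv0 _), hτc] at this
      exact this
    have hsum : ∑ j, τ w * x j = ∑ j, R w * v (j :: w) := by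
      rw [← Finset.mul_sum, ← Finset.mul_sum, ← hadd, ← hσ, hσ1, mul_one, hR]
      simp only
      rw [div_mul_cancel₀ _ (hv0 w).ne']
    have heq := (Finset.sum_eq_sum_iff_of_le hle2).1 hsum
    intro j
    rw [← hw]
    have := heq j (Finset.mem_univ j)
    rw [← hτc] at this
    change τ (j :: w) / v (j :: w) = R w
    rw [this, mul_div_cancel_right₀ _ (hv0 _).ne']
  intro j
  set u : ℕ → List (Fin t) := fun i => List.replicate i j ++ w₀ with hu
  have hus : ∀ i, u (i + 1) = j :: u i := fun i => by simp [hu, List.replicate_succ]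
  have hRu : ∀ i, R (u i) = R w₀ := by
    intro i
    induction i with
    | zero => simp [hu]
    | succ i ih => rw [hus]; exact hconst _ ih j
  have hτu : ∀ i, τ (u i) = τ w₀ * x j ^ i := by
    intro i
    induction i with
    | zero => simp [hu]
    | succ i ih => rw [hus, hτc, ih, pow_succ, mul_assoc]
  have hrel : ∀ i, τ w₀ * x j ^ i * α ^ k (u i) = R w₀ * a (u i) := by
    intro i
    have h1 := hRu i
    change τ (u i) / v (u i) = R w₀ at h1
    rw [div_eq_iff (hv0 _).ne', hτu, hv (u i)] at h1
    rw [h1]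
    field_simp
  have hpig : ∃ i i' : ℕ, i < i' ∧ a (u i) = a (u i') := by
    obtain ⟨i, i', hne, heq⟩ := Finite.exists_ne_map_eq_of_infinite
      (fun i : ℕ => (⟨a (u i), ha _⟩ : S))
    have heq : a (u i) = a (u i') := congrArg Subtype.val heq
    rcases lt_or_gt_of_ne hne with h | h
    · exact ⟨i, i', h, heq⟩
    · exact ⟨i', i, h, heq.symm⟩
  obtain ⟨i, i', hlt, heq⟩ := hpig
  have h1 := hrel i
  have h2 := hrel i'
  rw [heq, ← h2] at h1
  obtain ⟨p, hp⟩ := Nat.exists_eq_add_of_lt hlt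
  have h3 : α ^ k (u i) = x j ^ (p + 1) * α ^ k (u i') := by
    have hne : τ w₀ * x j ^ i ≠ 0 := (mul_pos (hτ0 _) (pow_pos (hx0 j) _)).ne'
    apply mul_left_cancel₀ hne
    rw [h1, hp]
    ring
  have hklt : k (u i) < k (u i') := by
    have : α ^ k (u i) < α ^ k (u i') := by
      rw [h3]
      exact mul_lt_of_lt_one_left (by positivity) (pow_lt_one₀ (hx0 j).le (hx1 j) (by omega))
    exact (pow_lt_pow_iff_right₀ hα).1 this
  obtain ⟨z, hz⟩ := Nat.exists_eq_add_of_lt hklt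
  refine ⟨p + 1, z + 1, by omega, by omega, ?_⟩
  rw [hz] at h3
  have hne : α ^ k (u i) ≠ 0 := by positivity
  apply mul_left_cancel₀ hne
  rw [mul_one]
  conv_rhs => rw [h3]
  ring

end DustAux

namespace DustAux

lemma geom {lam : ℝ} {B : Finset ℝ} {E : Set ℝ} (h : Sys lam B) (hE : Att lam B E) {α β : ℝ}
    (hs : α + β = B.card)
    (hm : α * β = ov lam lam B) (hβ0 : 0 < β) (hβ : β < 1) (hα : 1 < α)
    {Y : Type*} [MetricSpace Y] {F : Set Y} (hFne : F.Nonempty) (hFc : IsCompact F) {t : ℕ}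
    (ht : 2 ≤ t) (g : Fin t → Y → Y) (r : Fin t → ℝ) (hr : ∀ j, r j ∈ Set.Ioo (0 : ℝ) 1)
    (hg : ∀ j x y, dist (g j x) (g j y) = r j * dist x y) (hF : F = ⋃ j, g j '' F)
    (hdis : ∀ j j', j ≠ j' → Disjoint (g j '' F) (g j' '' F))
    (φ : ℝ → Y) (hφ : ∀ x ∈ E, φ x ∈ F) (hφs : ∀ y ∈ F, ∃ x ∈ E, φ x = y) {C : ℝ} (hC : 0 < C)
    (hφ1 : ∀ x ∈ E, ∀ y ∈ E, dist x y ≤ C * dist (φ x) (φ y))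
    (hφ2 : ∀ x ∈ E, ∀ y ∈ E, dist (φ x) (φ y) ≤ C * dist x y) :
    ∃ x : Fin t → ℝ, (∀ j, 0 < x j) ∧ ∑ j, x j = 1 ∧
      ∀ j, ∃ p z : ℕ, 1 ≤ p ∧ 1 ≤ z ∧ x j ^ p * α ^ z = 1 := by
  classical
  have hp := h.pos
  have hl1 : lam < 1 := by linarith [h.half]
  have hgF : ∀ j, ∀ x ∈ F, g j x ∈ F := fun j x hx => by
    rw [hF]
    exact Set.mem_iUnion.2 ⟨j, x, hx, rfl⟩
  have hgc : ∀ j, Continuous (g j) := fun j => by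
    have : LipschitzWith (r j).toNNReal (g j) := LipschitzWith.of_dist_le_mul (fun x y => by
      rw [hg, Real.coe_toNNReal _ (hr j).1.le])
    exact this.continuous
  have hδ : ∀ j, ∃ δ : ℝ, 0 < δ ∧ ∀ x ∈ F, ∀ y ∈ F, y ∉ g j '' F → δ ≤ dist (g j x) y := by
    intro j
    have hcl : IsClosed (⋃ i : {i // i ≠ j}, g i '' F) :=
      isClosed_iUnion_of_finite (fun i => (hFc.image (hgc _)).isClosed)
    have hdj : Disjoint (g j '' F) (⋃ i : {i // i ≠ j}, g i '' F) :=
      Set.disjoint_iUnion_right.2 (fun i => hdis _ _ i.2.symm)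
    obtain ⟨δ, hδ0, hδ⟩ := hdj.exists_thickenings (hFc.image (hgc j)) hcl
    refine ⟨δ, hδ0, fun x hx y hy hyn => ?_⟩
    by_contra hc
    push Not at hc
    have hy' := hy
    rw [hF] at hy'
    obtain ⟨i, hi⟩ := Set.mem_iUnion.1 hy'
    have hij : i ≠ j := by rintro rfl; exact hyn hi
    have m1 : y ∈ Metric.thickening δ (g j '' F) :=
      Metric.mem_thickening_iff.2 ⟨g j x, ⟨x, hx, rfl⟩, by rwa [dist_comm]⟩
    have m2 : y ∈ Metric.thickening δ (⋃ i : {i // i ≠ j}, g i '' F) :=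
      Metric.mem_thickening_iff.2 ⟨y, Set.mem_iUnion.2 ⟨⟨i, hij⟩, hi⟩, by simpa using hδ0⟩
    exact Set.disjoint_left.1 hδ m1 m2
  choose δ' hδ0' hδ' using hδ
  haveI : Nonempty (Fin t) := ⟨⟨0, by omega⟩⟩
  set δ := Finset.univ.inf' Finset.univ_nonempty δ' with hδdef
  have hδ0 : 0 < δ := (Finset.lt_inf'_iff _).2 (fun j _ => hδ0' j)
  have hδ : ∀ j, ∀ x ∈ F, ∀ y ∈ F, y ∉ g j '' F → δ ≤ dist (g j x) y := fun j x hx y hy hn =>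
    (Finset.inf'_le _ (Finset.mem_univ j)).trans (hδ' j x hx y hy hn)
  -- cylinders
  let G : List (Fin t) → Y → Y := fun w => w.rec id (fun j _ f => f ∘ g j)
  let ρ : List (Fin t) → ℝ := fun w => w.rec 1 (fun j _ f => f * r j)
  have hG0 : G [] = id := rfl
  have hGc : ∀ j w x, G (j :: w) x = G w (g j x) := fun j w x => rfl
  have hρ0 : ρ [] = 1 := rfl
  have hρc : ∀ j w, ρ (j :: w) = ρ w * r j := fun j w => rfl
  clear_value G ρ
  have hρpos : ∀ w, 0 < ρ w := by
    intro w
    induction w with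
    | nil => rw [hρ0]; exact one_pos
    | cons j w ih => rw [hρc]; exact mul_pos ih (hr j).1
  have hρle : ∀ w, ρ w ≤ 1 := by
    intro w
    induction w with
    | nil => rw [hρ0]
    | cons j w ih => rw [hρc]; exact mul_le_one₀ ih (hr j).1.le (hr j).2.le
  have hGd : ∀ w x y, dist (G w x) (G w y) = ρ w * dist x y := by
    intro w
    induction w with
    | nil => intro x y; simp [hG0, hρ0]
    | cons j w ih => intro x y; rw [hGc, hGc, ih, hg, hρc, mul_assoc]
  have hGF : ∀ w, ∀ x ∈ F, G w x ∈ F := by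
    intro w
    induction w with
    | nil => intro x hx; simpa [hG0] using hx
    | cons j w ih => intro x hx; rw [hGc]; exact ih _ (hgF j x hx)
  have hGinj : ∀ w x y, G w x = G w y → x = y := by
    intro w x y hxy
    have h1 := hGd w x y
    rw [hxy, dist_self] at h1
    have : dist x y = 0 := by
      rcases mul_eq_zero.1 h1.symm with h2 | h2
      · exact absurd h2 (hρpos w).ne'
      · exact h2
    exact dist_eq_zero.1 this
  have hGs : ∀ w, ∀ x ∈ F, ∀ y ∈ F, y ∉ G w '' F → ρ w * δ ≤ dist (G w x) y := by
    intro w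
    induction w with
    | nil =>
      intro x hx y hy hn
      exact absurd ⟨y, hy, by simp [hG0]⟩ hn
    | cons j w ih =>
      intro x hx y hy hn
      have hle : ρ (j :: w) * δ ≤ ρ w * δ := by
        rw [hρc]
        exact mul_le_mul_of_nonneg_right
          (mul_le_of_le_one_right (hρpos w).le (hr j).2.le) hδ0.le
      refine hle.trans ?_
      rw [hGc]
      by_cases hyw : y ∈ G w '' F
      · obtain ⟨y', hy', rfl⟩ := hyw
        rw [hGd]
        refine mul_le_mul_of_nonneg_left (hδ j x hx y' hy' ?_) (hρpos w).le
        rintro ⟨z, hz, rfl⟩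
        exact hn ⟨z, hz, hGc _ _ _⟩
      · exact ih _ (hgF j x hx) y hy hyw
  set A : List (Fin t) → Set ℝ := fun w => {x | x ∈ E ∧ φ x ∈ G w '' F} with hA
  have hAne : ∀ w, (A w).Nonempty := by
    intro w
    obtain ⟨y, hy⟩ := hFne
    obtain ⟨x, hx, hxy⟩ := hφs _ (hGF w y hy)
    exact ⟨x, hx, y, hy, hxy.symm⟩
  set κ := min (δ / C) 1 with hκ
  have hκ0 : 0 < κ := lt_min (div_pos hδ0 hC) one_pos
  have hκ1 : κ ≤ 1 := min_le_right _ _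
  have hAs : ∀ w, ∀ x ∈ A w, ∀ y ∈ E, y ∉ A w → κ * ρ w ≤ |x - y| := by
    rintro w x ⟨hxE, x', hx', hxx⟩ y hy hn
    have h1 := hGs w x' hx' (φ y) (hφ y hy) (fun hc => hn ⟨hy, hc⟩)
    rw [hxx] at h1
    have h2 := hφ2 x hxE y hy
    rw [Real.dist_eq] at h2
    have h3 : κ ≤ δ / C := min_le_left _ _
    have h4 : κ * ρ w ≤ δ / C * ρ w := mul_le_mul_of_nonneg_right h3 (hρpos w).le
    refine h4.trans ?_
    rw [div_mul_eq_mul_div, div_le_iff₀ hC]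
    linarith
  set K := C * Metric.diam F / κ with hK
  have hK0 : 0 ≤ K := div_nonneg (mul_nonneg hC.le Metric.diam_nonneg) hκ0.le
  have hAd : ∀ w, ∀ x ∈ A w, ∀ y ∈ A w, |x - y| ≤ K * (κ * ρ w) := by
    rintro w x ⟨hxE, x', hx', hxx⟩ y ⟨hyE, y', hy', hyy⟩
    have h1 := hφ1 x hxE y hyE
    rw [← hxx, ← hyy, hGd, Real.dist_eq] at h1
    have h2 := Metric.dist_le_diam_of_mem hFc.isBounded hx' hy'
    have h3 : K * (κ * ρ w) = C * (ρ w * Metric.diam F) := by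
      rw [hK]; field_simp
    rw [h3]
    refine h1.trans ?_
    have := hρpos w
    gcongr
  have hkex : ∀ w, ∃ k : ℕ, lam ^ k < κ * ρ w ∧ lam * (κ * ρ w) ≤ lam ^ k := by
    intro w
    obtain ⟨k, hk1, hk2⟩ := exists_nat_pow_near_of_lt_one (mul_pos hκ0 (hρpos w))
      (mul_le_one₀ hκ1 (hρpos w).le (hρle w)) hp hl1
    refine ⟨k + 1, hk1, ?_⟩
    rw [pow_succ, mul_comm (lam ^ k)]
    exact mul_le_mul_of_nonneg_left hk2 hp.le
  choose k hk hk' using hkex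
  obtain ⟨N, hN⟩ := exists_nat_ge (K / (lam * (1 - lam)) + 1)
  have hval := fun w => hasVal_piece h hE hs hm hβ0 hβ hα (A := A w) (fun x hx => hx.1) (hAne w)
    (hk w) (hk' w) (hAs w) hK0 (hAd w) hN
  choose i j hi hiN hji hv using hval
  have hpos : ∀ i j : ℕ, 1 ≤ i → j ≤ i → 0 < ((i : ℝ) - j / α) * (α / (α - β)) := by
    intro i j hi hj
    have hα0 : 0 < α := by linarith
    refine mul_pos ?_ (div_pos hα0 (by linarith))
    rw [sub_pos, div_lt_iff₀ hα0]
    have h1 : (1 : ℝ) ≤ i := by exact_mod_cast hi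
    have h2 : (j : ℝ) ≤ i := by exact_mod_cast hj
    nlinarith
  refine abstract_main r (fun j => (hr j).1) (fun j => (hr j).2) hp hl1 hα hκ0 ρ
    (fun w => ((i w : ℝ) - j w / α) * (α / (α - β)) / α ^ k w)
    (fun w => ((i w : ℝ) - j w / α) * (α / (α - β))) k
    (((Finset.range (N + 1) ×ˢ Finset.range (N + 1)).image
      (fun q : ℕ × ℕ => ((q.1 : ℝ) - q.2 / α) * (α / (α - β)))).filter (fun y => 0 < y))
    hρ0 hρc ?_ ?_ (fun w => rfl) hk hk' ?_
  · intro y hy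
    exact (Finset.mem_filter.1 hy).2
  · intro w
    refine Finset.mem_filter.2 ⟨Finset.mem_image.2 ⟨(i w, j w), ?_, rfl⟩,
      hpos _ _ (hi w) (hji w)⟩
    have := hiN w
    have := hji w
    simp only [Finset.mem_product, Finset.mem_range]
    omega
  · intro w
    refine hasVal_unique (hv w) (hasVal_sum (A' := fun j => A (j :: w)) (fun j => hv (j :: w)) ?_ ?_)
    · ext x
      simp only [hA, Set.mem_setOf_eq, Set.mem_iUnion]
      constructor
      · rintro ⟨hx, y, hy, hxy⟩
        rw [hF] at hy
        obtain ⟨l, y', hy', rfl⟩ := Set.mem_iUnion.1 hy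
        exact ⟨l, hx, y', hy', by rw [hGc]; exact hxy⟩
      · rintro ⟨l, hx, y, hy, hxy⟩
        exact ⟨hx, g l y, hgF l y hy, by rw [← hxy, hGc]⟩
    · intro l l' hll
      rw [Set.disjoint_left]
      rintro x ⟨_, y, hy, hxy⟩ ⟨_, y', hy', hxy'⟩
      rw [← hxy', hGc, hGc] at hxy
      have := hGinj w _ _ hxy
      exact Set.disjoint_left.1 (hdis l l' hll) ⟨y, hy, rfl⟩ ⟨y', hy', this.symm⟩

lemma roots_exist (n m : ℕ) (hm1 : 1 ≤ m) (hn : m + 2 ≤ n) :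
    ∃ α β : ℝ, α + β = n ∧ α * β = m ∧ 0 < β ∧ β < 1 ∧ 1 < α := by
  have h1 : (1 : ℝ) ≤ m := by exact_mod_cast hm1
  have h2 : (m : ℝ) + 2 ≤ n := by exact_mod_cast hn
  have hd : 0 ≤ (n : ℝ) ^ 2 - 4 * m := by nlinarith
  have hsq := Real.sq_sqrt hd
  have hs0 := Real.sqrt_nonneg ((n : ℝ) ^ 2 - 4 * m)
  set q := Real.sqrt ((n : ℝ) ^ 2 - 4 * m)
  have hq1 : (n : ℝ) - 2 < q := by
    by_contra hc
    push Not at hc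
    nlinarith
  have hq2 : q < n := by
    by_contra hc
    push Not at hc
    nlinarith
  exact ⟨(n + q) / 2, (n - q) / 2, by ring, by nlinarith, by linarith, by linarith, by linarith⟩

lemma class_sys {lam : ℝ} {n m : ℕ} {E : Set ℝ} (hE : IsInClassA lam n m E) :
    ∃ B : Finset ℝ, Sys lam B ∧ Att lam B E ∧ B.card = n ∧ ov lam lam B = m := by
  classical
  obtain ⟨⟨hl0, hl1⟩, hm1, hn, b, hb0, hbn, hmono, hvol, hcard, hne, hcomp, heq⟩ := hE
  have hl2 : 0 < lam * lam := mul_pos hl0 hl0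
  have hlt : ∀ i j, i < j → j < n → b i < b j := by
    intro i j hij
    induction j, hij using Nat.le_induction with
    | base => exact fun hj => hmono i hj
    | succ j hij ih => exact fun hj => (ih (by omega)).trans (hmono j hj)
  have hV : ∀ i, i + 1 < n →
      volume (Set.Icc (b i) (b i + lam) ∩ Set.Icc (b (i + 1)) (b (i + 1) + lam)) =
        ENNReal.ofReal (b i + lam - b (i + 1)) := by
    intro i hi
    have := hmono i hi
    rw [Set.Icc_inter_Icc, Real.volume_Icc, max_eq_right this.le, min_eq_left (by linarith)]
  have hViff : ∀ i, i + 1 < n →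
      (volume (Set.Icc (b i) (b i + lam) ∩ Set.Icc (b (i + 1)) (b (i + 1) + lam)) =
        ENNReal.ofReal (lam * lam) ↔ b (i + 1) - b i = lam * (1 - lam)) := by
    intro i hi
    rw [hV i hi]
    constructor
    · intro he
      have h1 : 0 < b i + lam - b (i + 1) := by
        rw [← ENNReal.ofReal_pos, he, ENNReal.ofReal_pos]; exact hl2
      rw [ENNReal.ofReal_eq_ofReal_iff h1.le hl2.le] at he
      linarith
    · intro he
      congr 1
      linarith
  have hgap : ∀ i, i + 1 < n → b (i + 1) - b i = lam * (1 - lam) ∨ lam ≤ b (i + 1) - b i := by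
    intro i hi
    by_cases hc : b i + lam < b (i + 1)
    · right; linarith
    · push Not at hc
      have h1 := hmono i hi
      rcases hvol i hi ⟨b (i + 1), ⟨h1.le, hc⟩, ⟨le_rfl, by linarith⟩⟩ with h2 | h2
      · right
        rw [hV i hi, ENNReal.ofReal_eq_zero] at h2
        linarith
      · left
        exact (hViff i hi).1 h2
  have hgap' : ∀ i, i + 1 < n → lam * (1 - lam) ≤ b (i + 1) - b i := by
    intro i hi
    rcases hgap i hi with h1 | h1
    · exact h1.ge
    · nlinarith
  have hle : ∀ i j, i ≤ j → j < n → b i ≤ b j := by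
    intro i j hij hj
    rcases hij.eq_or_lt with rfl | h1
    · exact le_rfl
    · exact (hlt i j h1 hj).le
  have hhalf : lam ≤ 1 / 2 := by
    have h1 := hgap' 0 (by omega)
    have h2 := hgap' 1 (by omega)
    have h3 := hle 2 (n - 1) (by omega) (by omega)
    rw [hbn] at h3
    norm_num at h1 h2
    rw [hb0] at h1
    have : (1 - lam) * (2 * lam) ≤ (1 - lam) * 1 := by linarith
    have := le_of_mul_le_mul_left this (by linarith)
    linarith
  have htwo : ∀ i j, i + 2 ≤ j → j < n → 2 * (lam * (1 - lam)) ≤ b j - b i := by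
    intro i j hij hj
    have h1 := hgap' i (by omega)
    have h2 := hgap' (i + 1) (by omega)
    have h3 := hle (i + 2) j hij hj
    have e : b (i + 1 + 1) = b (i + 2) := rfl
    linarith
  have hinj : ∀ i j, i < n → j < n → b i = b j → i = j := by
    intro i j hi hj hij
    rcases lt_trichotomy i j with h1 | h1 | h1
    · have := hlt i j h1 hj; linarith
    · exact h1
    · have := hlt j i h1 hi; linarith
  have hidx : ∀ i j, i < n → j < n → b i < b j → i < j := by
    intro i j hi hj hij
    by_contra hc
    have := hle j i (by omega) hi
    linarith
  have hll : 0 < lam * (1 - lam) := mul_pos hl0 (by linarith)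
  have hsys : Sys lam ((Finset.range n).image b) := by
    refine ⟨hl0, hhalf, ?_, ?_, ?_, ?_, ?_⟩
    · exact Finset.mem_image.2 ⟨0, Finset.mem_range.2 (by omega), hb0⟩
    · exact Finset.mem_image.2 ⟨n - 1, Finset.mem_range.2 (by omega), hbn⟩
    · intro x hx
      obtain ⟨i, hi, rfl⟩ := Finset.mem_image.1 hx
      rw [← hb0]
      exact hle 0 i (by omega) (Finset.mem_range.1 hi)
    · intro x hx
      obtain ⟨i, hi, rfl⟩ := Finset.mem_image.1 hx
      rw [← hbn]
      have := Finset.mem_range.1 hi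
      exact hle i (n - 1) (by omega) (by omega)
    · intro x hx y hy hxy
      obtain ⟨i, hi, rfl⟩ := Finset.mem_image.1 hx
      obtain ⟨j, hj, rfl⟩ := Finset.mem_image.1 hy
      rw [Finset.mem_range] at hi hj
      have hij := hidx i j hi hj hxy
      rcases (show i + 1 ≤ j from hij).eq_or_lt with rfl | h1
      · exact hgap i hj
      · right
        have := htwo i j h1 hj
        nlinarith
  refine ⟨(Finset.range n).image b, hsys, ?_, ?_, ?_⟩
  · have hmem : ∀ x, x ∈ E ↔ ∃ c ∈ (Finset.range n).image b, ∃ y ∈ E, c + lam * y = x := by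
      intro x
      conv_lhs => rw [heq]
      simp only [Set.mem_iUnion, Set.mem_image, Finset.mem_image]
      constructor
      · rintro ⟨i, hi, y, hy, rfl⟩
        exact ⟨b i, ⟨i, hi, rfl⟩, y, hy, by ring⟩
      · rintro ⟨_, ⟨i, hi, rfl⟩, y, hy, rfl⟩
        exact ⟨i, hi, y, hy, by ring⟩
    obtain ⟨lo, hlo, hlo'⟩ := hcomp.exists_isLeast hne
    obtain ⟨hi, hhi, hhi'⟩ := hcomp.exists_isGreatest hne
    have h1 : 0 ≤ lo := by
      obtain ⟨c, hc, y, hy, e⟩ := (hmem lo).1 hlo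
      have h2 := hlo' hy
      have h3 := hsys.nonneg c hc
      have h4 := mul_le_mul_of_nonneg_left h2 hl0.le
      by_contra hcon
      push Not at hcon
      nlinarith
    have h2 : lo ≤ 0 := by
      have := hlo' ((hmem (0 + lam * lo)).2 ⟨0, hsys.zero_mem, lo, hlo, rfl⟩)
      by_contra hcon
      push Not at hcon
      nlinarith
    have h3 : hi ≤ 1 := by
      obtain ⟨c, hc, y, hy, e⟩ := (hmem hi).1 hhi
      have h2 := hhi' hy
      have h3 := hsys.le_top c hc
      have h4 := mul_le_mul_of_nonneg_left h2 hl0.le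
      by_contra hcon
      push Not at hcon
      nlinarith
    have h0 : lo = 0 := le_antisymm h2 h1
    exact ⟨h0 ▸ hlo, fun x hx => h1.trans (hlo' hx), fun x hx => (hhi' hx).trans h3, hmem⟩
  · rw [Finset.card_image_of_injOn, Finset.card_range]
    intro i hi j hj hij
    simp only [Finset.coe_range, Set.mem_Iio] at hi hj
    exact hinj i j hi hj hij
  · rw [← hcard]
    unfold ov
    rw [← Set.ncard_coe_finset]
    have himg : (((Finset.range n).image b).filter
        (fun t => t + lam * (1 - lam) ∈ (Finset.range n).image b) : Set ℝ) =
        b '' {i : ℕ | i + 1 < n ∧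
          volume (Set.Icc (b i) (b i + lam) ∩ Set.Icc (b (i + 1)) (b (i + 1) + lam)) =
            ENNReal.ofReal (lam * lam)} := by
      ext x
      rw [Finset.mem_coe, Finset.mem_filter]
      constructor
      · rintro ⟨hx, hy⟩
        obtain ⟨i, hi, rfl⟩ := Finset.mem_image.1 hx
        obtain ⟨j, hj, hbj⟩ := Finset.mem_image.1 hy
        rw [Finset.mem_range] at hi hj
        have hij := hidx i j hi hj (by linarith)
        rcases (show i + 1 ≤ j from hij).eq_or_lt with rfl | h1
        · exact ⟨i, ⟨hj, (hViff i hj).2 (by linarith)⟩, rfl⟩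
        · have := htwo i j h1 hj
          linarith
      · rintro ⟨i, ⟨hi, hv⟩, rfl⟩
        have := (hViff i hi).1 hv
        exact ⟨Finset.mem_image.2 ⟨i, Finset.mem_range.2 (by omega), rfl⟩,
          Finset.mem_image.2 ⟨i + 1, Finset.mem_range.2 hi, by linarith⟩⟩
    rw [himg, Set.ncard_image_of_injOn]
    rintro i ⟨hi, _⟩ j ⟨hj, _⟩ hij
    exact hinj i j (by omega) (by omega) hij

end DustAux

/-- If `E ∈ 𝒜(λ, n, m)` is Lipschitz equivalent to some dust-like
self-similar set, then there is an integer `k ≥ 2` such that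
`x^(2k) - n x^k + m` is reducible in `ℤ[x]`. -/
theorem reducible_of_lipEquiv_dustLike
    (lam : ℝ) (n m : ℕ) (E : Set ℝ) (hE : IsInClassA lam n m E)
    (hF : ∃ (d : ℕ) (F : Set (EuclideanSpace ℝ (Fin d))), IsDustLike F ∧ LipEquiv E F) :
    ∃ k : ℕ, 2 ≤ k ∧
      ¬ Irreducible (X ^ (2 * k) - C (n : ℤ) * X ^ k + C (m : ℤ)) := by
  obtain ⟨B, hsys, hatt, hcard, hov⟩ := DustAux.class_sys hE
  obtain ⟨_, hm1, hn, _⟩ := hE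
  obtain ⟨d, F, ⟨hFne, hFc, t, ht, g, r, hr, hg, hFe, hdis⟩, f, hf, C, hC, hlip⟩ := hF
  obtain ⟨α, β, hs, hm, hβ0, hβ, hα⟩ := DustAux.roots_exist n m hm1 hn
  classical
  have hval : ∀ x (hx : x ∈ E), (fun x => if hx : x ∈ E then (f ⟨x, hx⟩ :
      EuclideanSpace ℝ (Fin d)) else 0) x = f ⟨x, hx⟩ := fun x hx => by simp [hx]
  generalize (fun x => if hx : x ∈ E then (f ⟨x, hx⟩ :
      EuclideanSpace ℝ (Fin d)) else 0) = φ at hval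
  obtain ⟨x, hx0, hx1, hx⟩ := DustAux.geom hsys hatt (by rw [hcard]; exact hs)
    (by rw [hov]; exact hm) hβ0 hβ hα hFne hFc ht g r hr hg hFe hdis φ
    (fun x hx => by rw [hval x hx]; exact (f ⟨x, hx⟩).2)
    (fun y hy => by
      obtain ⟨⟨x, hx⟩, hxy⟩ := hf.2 ⟨y, hy⟩
      exact ⟨x, hx, by rw [hval x hx, hxy]⟩) hC
    (fun x hx y hy => by
      rw [hval x hx, hval y hy]
      have := (hlip ⟨x, hx⟩ ⟨y, hy⟩).1
      rw [inv_mul_le_iff₀ hC] at this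
      exact this)
    (fun x hx y hy => by
      rw [hval x hx, hval y hy]
      exact (hlip ⟨x, hx⟩ ⟨y, hy⟩).2)
  exact DustAux.final_alg n m hs hm hβ0 hβ hα ht x hx0 hx1 hx
end

section
/- Let E belong to the class A(λ,n,m). If there exists a dust-like self-similar set F that is Lipschitz equivalent to E, then m is a perfect power, i.e., there exist natural numbers a and i with i ≥ 2 such that m = a^i. -/
open MeasureTheory Polynomial

lemma nt_dvd (m k d a : ℕ) (hm : 1 ≤ m) (hk : 0 < k) (hd : 0 < d)
    (hpp : ¬ ∃ a i : ℕ, 2 ≤ i ∧ m = a ^ i) (h : a ^ k = m ^ d) : k ∣ d := by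
  -- reduce to coprime exponents
  set e := Nat.gcd k d with he
  have hepos : 0 < e := Nat.gcd_pos_of_pos_left _ hk
  obtain ⟨k', hk'⟩ := Nat.gcd_dvd_left k d
  obtain ⟨d', hd'⟩ := Nat.gcd_dvd_right k d
  rw [← he] at hk' hd'
  have hcop : Nat.Coprime k' d' := by
    have := Nat.coprime_div_gcd_div_gcd (m := k) (n := d) hepos
    rw [← he] at this
    rwa [Nat.div_eq_of_eq_mul_right hepos hk', Nat.div_eq_of_eq_mul_right hepos hd'] at this
  have h1 : a ^ k' = m ^ d' := by
    apply Nat.pow_left_injective (n := e) (by omega)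
    simp only
    rw [← pow_mul, ← pow_mul, mul_comm k', mul_comm d', ← hk', ← hd', h]
  obtain ⟨c, hc1, hc2⟩ := (Nat.exists_eq_pow_of_exponent_coprime_of_pow_eq_pow hcop h1)
  have : k' = 1 := by
    by_contra hne
    have : k' ≠ 0 := by rintro rfl; omega
    exact hpp ⟨c, k', by omega, by assumption⟩
  subst this
  rw [hk', hd']; simp

lemma nt_irred (n m : ℕ) (hm : 1 ≤ m) (hmn : m + 2 ≤ n) :
    Irreducible (X ^ 2 - C ((n:ℚ)/m) * X + C (1/(m:ℚ)) : ℚ[X]) := by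
  have hm0 : (m:ℚ) ≠ 0 := by positivity
  have hdeg : (X ^ 2 - C ((n:ℚ)/m) * X + C (1/(m:ℚ)) : ℚ[X]).natDegree = 2 := by compute_degree!
  rw [Polynomial.irreducible_iff_roots_eq_zero_of_degree_le_three (by rw [hdeg]) (by rw [hdeg]; norm_num)]
  rw [Multiset.eq_zero_iff_forall_notMem]
  intro q hq
  have hq := (Polynomial.mem_roots'.1 hq).2
  simp [Polynomial.IsRoot] at hq
  have hq0 : q ≠ 0 := by
    rintro rfl
    simp at hq
    omega
  have h2 : (q⁻¹)^2 - n * q⁻¹ + m = 0 := by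
    field_simp
    field_simp at hq
    linarith
  have hint : IsIntegral ℤ q⁻¹ := by
    refine ⟨X^2 - C (n:ℤ) * X + C (m:ℤ), ?_, ?_⟩
    · monicity!
    · simp [Polynomial.eval₂_eq_eval_map]
      simpa using h2
  obtain ⟨u, hu⟩ := IsIntegrallyClosed.isIntegral_iff.1 hint
  simp at hu
  rw [← hu] at h2
  have h3 : u * ((n:ℤ) - u) = m := by
    have : (u * ((n:ℤ) - u) : ℚ) = (m:ℤ) := by push_cast; linarith
    exact_mod_cast this
  have hmn' : (m:ℤ) + 2 ≤ n := by exact_mod_cast hmn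
  have hm' : (1:ℤ) ≤ m := by exact_mod_cast hm
  have hupos : 0 < u := by
    by_contra hcon
    nlinarith
  have hu2 : 0 < (n:ℤ) - u := by
    by_contra hcon
    nlinarith
  nlinarith

lemma nt_norm {K : Type*} [Field K] (h : K[X]) (hirr : Irreducible h) (hmonic : h.Monic) :
    ∃ N : AdjoinRoot h →* K, N (AdjoinRoot.root h) = (-1) ^ h.natDegree * h.coeff 0 := by
  refine ⟨Algebra.norm K, ?_⟩
  have h1 := Algebra.PowerBasis.norm_gen_eq_coeff_zero_minpoly (AdjoinRoot.powerBasis hirr.ne_zero)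
  rw [AdjoinRoot.powerBasis_gen, AdjoinRoot.powerBasis_dim] at h1
  rw [h1, AdjoinRoot.minpoly_root hirr.ne_zero, hmonic.leadingCoeff]
  simp

lemma nt_main (n m : ℕ) (hm : 1 ≤ m) (hmn : m + 2 ≤ n)
    (hpp : ¬ ∃ a i : ℕ, 2 ≤ i ∧ m = a ^ i)
    (r r' x : ℝ) (k : ℕ) (hk : 0 < k) (hx : 0 < x) (hxr : x ^ k = r)
    (hr : r ^ 2 - (n/m) * r + 1 / m = 0) (hr' : r' ^ 2 - (n/m) * r' + 1 / m = 0)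
    (P : ℚ[X]) (hP : aeval x P = 0) (x' : ℝ) (hx' : x' ^ k = r') : aeval x' P = 0 := by
  set h : ℚ[X] := X ^ 2 - C ((n:ℚ)/m) * X + C (1/(m:ℚ)) with hh
  have hirr : Irreducible h := nt_irred n m hm hmn
  have : Fact (Irreducible h) := ⟨hirr⟩
  have hmonic : h.Monic := by rw [hh]; monicity!
  have hdeg : h.natDegree = 2 := by rw [hh]; compute_degree!
  let ι : AdjoinRoot h →ₐ[ℚ] ℝ := AdjoinRoot.liftAlgHom h (Algebra.ofId ℚ ℝ) r (by
    have : (algebraMap ℚ ℝ) = (algebraMap ℚ ℝ) := rfl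
    simp [hh, Algebra.ofId] ; simpa using hr)
  let ι' : AdjoinRoot h →ₐ[ℚ] ℝ := AdjoinRoot.liftAlgHom h (Algebra.ofId ℚ ℝ) r' (by
    simp [hh, Algebra.ofId] ; simpa using hr')
  have hι : ι (AdjoinRoot.root h) = r := AdjoinRoot.liftAlgHom_root _ _ _ _
  have hι' : ι' (AdjoinRoot.root h) = r' := AdjoinRoot.liftAlgHom_root _ _ _ _
  letI := ι.toRingHom.toAlgebra
  have halg : ∀ z, algebraMap (AdjoinRoot h) ℝ z = ι z := fun z => rfl
  set ρ := AdjoinRoot.root h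
  have hxint : IsIntegral (AdjoinRoot h) x := by
    refine ⟨X ^ k - C ρ, monic_X_pow_sub_C _ (by omega), ?_⟩
    simp [halg, hι, hxr]
  set g := minpoly (AdjoinRoot h) x with hg
  have hgm : g.Monic := minpoly.monic hxint
  have hgd : g ∣ X ^ k - C ρ := minpoly.dvd _ _ (by simp [halg, hι, hxr])
  set d := g.natDegree with hd
  have hdpos : 0 < d := minpoly.natDegree_pos hxint
  -- absolute value of constant coefficient
  have hc : |ι (g.coeff 0)| = x ^ d := by
    let j : AdjoinRoot h →+* ℂ := (algebraMap ℝ ℂ).comp (ι.toRingHom)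
    have hsp : (g.map j).Splits := IsAlgClosed.splits _
    have h1 := hsp.coeff_zero_eq_prod_roots_of_monic (hgm.map j)
    have h2 : ∀ z ∈ (g.map j).roots, ‖z‖ = x := by
      intro z hz
      have hz := (Polynomial.mem_roots'.1 hz).2
      have : ((X ^ k - C ρ).map j).IsRoot z := by
        obtain ⟨q, hq⟩ := hgd
        rw [hq, Polynomial.map_mul]
        simp only [IsRoot, eval_mul] at hz ⊢
        rw [hz, zero_mul]
      have hz2 : z ^ k = (r:ℂ) := by
        simp [IsRoot, j, hι] at this
        linear_combination this
      have : ‖z‖ ^ k = x ^ k := by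
        rw [← norm_pow, hz2, hxr]
        simp
        rw [← hxr]; positivity
      exact (pow_left_inj₀ (norm_nonneg _) hx.le (by omega)).1 this
    have h3 : ‖((g.map j).roots).prod‖ = x ^ d := by
      have : ‖((g.map j).roots).prod‖ = (((g.map j).roots).map (fun z => ‖z‖)).prod := by
        exact (map_multiset_prod (normHom : ℂ →*₀ ℝ) _)
      rw [this, Multiset.map_congr rfl h2, Multiset.map_const', Multiset.prod_replicate,
        ← hsp.natDegree_eq_card_roots, hgm.natDegree_map]
    have h4 : ‖(g.map j).coeff 0‖ = x ^ d := by
      rw [h1, norm_mul, h3]; simp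
    rw [← h4, coeff_map]
    simp [j]
  -- hence x^d in K
  obtain ⟨c, hc⟩ : ∃ c : AdjoinRoot h, ι c = x ^ d := by
    rcases abs_choice (ι (g.coeff 0)) with h1 | h1
    · exact ⟨_, by rw [← hc, h1]⟩
    · exact ⟨- g.coeff 0, by rw [← hc, h1, map_neg]⟩
  have hck : c ^ k = ρ ^ d := by
    apply ι.toRingHom.injective
    show ι (c^k) = ι (ρ ^ d)
    rw [map_pow, map_pow, hc, hι, ← hxr, ← pow_mul, ← pow_mul, mul_comm]
  obtain ⟨N, hnorm⟩ := nt_norm h hirr hmonic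
  have hnorm : N ρ = 1 / m := by
    rw [hnorm, hdeg]
    simp [hh]
  have hN : (N c) ^ k = (1 / m) ^ d := by
    rw [← map_pow, hck, map_pow, hnorm]
  set q : ℚ := |N c|⁻¹ with hq
  have hqk : q ^ k = m ^ d := by
    rw [hq, inv_pow, ← abs_pow, hN]
    simp
  have hqint : IsIntegral ℤ q := by
    refine ⟨X ^ k - C ((m:ℤ)^d), monic_X_pow_sub_C _ (by omega), ?_⟩
    rw [eval₂_sub, eval₂_X_pow, eval₂_C, hqk]; simp
  obtain ⟨u, hu⟩ := IsIntegrallyClosed.isIntegral_iff.1 hqint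
  simp at hu
  have hu0 : 0 ≤ u := by
    have : 0 ≤ q := by positivity
    rw [← hu] at this
    exact_mod_cast this
  obtain ⟨a, rfl⟩ := Int.eq_ofNat_of_zero_le hu0
  have hak : a ^ k = m ^ d := by
    rw [← hu] at hqk
    exact_mod_cast hqk
  have hkd : k ∣ d := nt_dvd m k d a hm hk hdpos hpp hak
  have hle := Nat.le_of_dvd hdpos hkd
  have hgeq : g = X ^ k - C ρ := by
    refine (Polynomial.eq_of_monic_of_dvd_of_natDegree_le hgm
      (monic_X_pow_sub_C _ (by omega)) hgd ?_).symm
    rw [natDegree_X_pow_sub_C]; exact hle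
  have hdvd : X ^ k - C ρ ∣ P.map (algebraMap ℚ (AdjoinRoot h)) := by
    rw [← hgeq]
    refine minpoly.dvd _ _ ?_
    rw [aeval_def, eval₂_map]
    have : (algebraMap (AdjoinRoot h) ℝ).comp (algebraMap ℚ (AdjoinRoot h)) = algebraMap ℚ ℝ := by
      exact Subsingleton.elim _ _
    rw [this]; exact hP
  have := Polynomial.map_dvd ι'.toRingHom hdvd
  rw [Polynomial.map_map, show (ι'.toRingHom).comp (algebraMap ℚ (AdjoinRoot h)) = algebraMap ℚ ℝ from Subsingleton.elim _ _] at this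
  obtain ⟨q, hq⟩ := this
  rw [aeval_def, eval₂_eq_eval_map, hq, eval_mul]
  simp [hι', hx']

lemma nt_final (n m : ℕ) (hm : 1 ≤ m) (hmn : m + 2 ≤ n)
    (r : ℝ) (hr0 : 0 < r) (hr : 1 = n * r - m * r ^ 2)
    (t : ℕ) (ht : 0 < t) (p : Fin t → ℝ) (hp : ∀ j, 0 < p j) (hsum : ∑ j, p j = 1)
    (hrel : ∀ j, ∃ K L : ℕ, 0 < K ∧ 0 < L ∧ p j ^ K = r ^ L) :
    ∃ a i : ℕ, 2 ≤ i ∧ m = a ^ i := by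
  by_contra hpp
  choose K L hK hL hKL using hrel
  have hm0 : (0:ℝ) < m := by exact_mod_cast hm
  set k := ∏ j, K j with hk
  have hkpos : 0 < k := Finset.prod_pos fun j _ => hK j
  set x : ℝ := r ^ ((k:ℝ)⁻¹) with hx
  have hxpos : 0 < x := Real.rpow_pos_of_pos hr0 _
  have hxk : x ^ k = r := Real.rpow_inv_natCast_pow hr0.le hkpos.ne'
  have hq : ∀ j, ∃ q : ℕ, 0 < q ∧ p j = x ^ q := by
    intro j
    obtain ⟨c, hc⟩ : K j ∣ k := Finset.dvd_prod_of_mem _ (Finset.mem_univ j)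
    have hc0 : 0 < c := by
      rcases Nat.eq_zero_or_pos c with h | h
      · rw [h] at hc; omega
      · exact h
    refine ⟨c * L j, Nat.mul_pos hc0 (hL j), ?_⟩
    have : p j ^ (K j) = (x ^ (c * L j)) ^ (K j) := by
      rw [hKL, ← hxk, ← pow_mul, ← pow_mul, hc]; ring_nf
    exact (pow_left_inj₀ (hp j).le (by positivity) (hK j).ne').1 this
  choose q hq0 hq using hq
  have hnm : (m:ℝ) + 2 ≤ n := by exact_mod_cast hmn
  -- other root
  set r' : ℝ := 1 / (m * r) with hr'
  have hr'0 : 0 < r' := by positivity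
  have hrr : r' ≠ r := by
    intro h
    have h1 : m * r ^ 2 = 1 := by
      rw [hr'] at h; field_simp at h; linarith
    have h2 : n * r = 2 := by linarith
    have h3 : (n:ℝ)^2 = 4 * m := by
      have : (n * r)^2 = 4 := by rw [h2]; norm_num
      have h5 : (n:ℝ)^2 * (m * r^2) = 4 * m := by linear_combination m * this
      rwa [h1, mul_one] at h5
    nlinarith [sq_nonneg ((n:ℝ) - 2)]
  have e1 : r ^ 2 - (n/m) * r + 1 / m = 0 := by
    field_simp; linarith
  have e2 : r' ^ 2 - (n/m) * r' + 1 / m = 0 := by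
    rw [hr']; field_simp; linarith
  set x' : ℝ := r' ^ ((k:ℝ)⁻¹) with hx'
  have hx'pos : 0 < x' := Real.rpow_pos_of_pos hr'0 _
  have hx'k : x' ^ k = r' := Real.rpow_inv_natCast_pow hr'0.le hkpos.ne'
  have key := nt_main n m hm hmn hpp r r' x k hkpos hxpos hxk e1 e2 (1 - ∑ j, X ^ (q j))
    (by simp [← hq, hsum]) x' hx'k
  simp at key
  have s1 : ∑ j, x ^ q j = 1 := by simp [← hq, hsum]
  have s2 : ∑ j, x' ^ q j = 1 := by linarith
  have : Nonempty (Fin t) := ⟨⟨0, ht⟩⟩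
  have hne : x ≠ x' := by
    intro h; apply hrr; rw [← hxk, ← hx'k, h]
  rcases lt_or_gt_of_ne hne with h | h
  · have : ∑ j, x ^ q j < ∑ j, x' ^ q j :=
      Finset.sum_lt_sum_of_nonempty Finset.univ_nonempty fun j _ =>
        pow_lt_pow_left₀ h hxpos.le (hq0 j).ne'
    linarith
  · have : ∑ j, x' ^ q j < ∑ j, x ^ q j :=
      Finset.sum_lt_sum_of_nonempty Finset.univ_nonempty fun j _ =>
        pow_lt_pow_left₀ h hx'pos.le (hq0 j).ne'
    linarith


lemma core_rel (t : ℕ) (p : Fin t → ℝ) (hp : ∀ j, 0 < p j) (hp1 : ∀ j, p j < 1)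
    (hsum : ∑ j, p j = 1) (M : List (Fin t) → ℝ) (hM : ∀ w, 0 < M w)
    (hadd : ∀ w, M w = ∑ j, M (j :: w)) (C : ℝ)
    (hC : ∀ w : List (Fin t), M w ≤ C * (w.map p).prod)
    (r : ℝ) (hr0 : 0 < r) (S : Set ℝ) (hS : S.Finite)
    (l : List (Fin t) → ℕ) (hl : ∀ w, ∃ a ∈ S, M w = r ^ l w * a)
    (D : ℕ) (hD : ∀ w j, ∃ e ≤ D, l (j :: w) = l w + e) :
    ∀ j, ∃ K L : ℕ, 0 < K ∧ 0 < L ∧ p j ^ K = r ^ L := by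
  choose a haS hMa using hl
  have hP : ∀ w : List (Fin t), 0 < (w.map p).prod := by
    intro w
    induction w with
    | nil => simp
    | cons j w ih => simpa using mul_pos (hp j) ih
  set ρ : List (Fin t) → ℝ := fun w => M w / (w.map p).prod with hρ
  have hρpos : ∀ w, 0 < ρ w := fun w => div_pos (hM w) (hP w)
  have hρC : ∀ w, ρ w ≤ C := fun w => (div_le_iff₀ (hP w)).2 (hC w)
  have hρsum : ∀ w, ∑ j, p j * ρ (j :: w) = ρ w := by
    intro w
    simp only [hρ, List.map_cons, List.prod_cons]
    rw [hadd w, Finset.sum_div]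
    refine Finset.sum_congr rfl fun j _ => ?_
    have := (hp j).ne'
    have := (hP w).ne'
    field_simp
  -- finite set of ratios
  set Φ : Set ℝ := (fun q : (ℕ × Fin t) × (ℝ × ℝ) => r ^ q.1.1 * q.2.1 / (q.2.2 * p q.1.2)) ''
    (((Set.Iic D) ×ˢ Set.univ) ×ˢ (S ×ˢ S)) with hΦ
  have hΦfin : Φ.Finite := by
    apply Set.Finite.image
    exact ((Set.finite_Iic D).prod Set.finite_univ).prod (hS.prod hS)
  have hapos : ∀ w, 0 < a w := by
    intro w
    have h1 := hM w
    rw [hMa w] at h1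
    exact pos_of_mul_pos_right h1 (by positivity)
  have hratio : ∀ w j, ρ (j :: w) / ρ w ∈ Φ := by
    intro w j
    obtain ⟨e, he, hle⟩ := hD w j
    refine ⟨((e, j), (a (j :: w), a w)), ⟨⟨he, trivial⟩, haS _, haS _⟩, ?_⟩
    simp only [hρ, List.map_cons, List.prod_cons]
    rw [hMa (j :: w), hMa w, hle, pow_add]
    have := (hp j).ne'
    have := (hP w).ne'
    have := (hapos w).ne'
    field_simp
  obtain ⟨ε, hε, hgap⟩ : ∃ ε > 0, ∀ y ∈ Φ, y < 1 + ε → y ≤ 1 := by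
    have hf : (Φ ∩ Set.Ioi 1).Finite := hΦfin.inter_of_left _
    rcases (Φ ∩ Set.Ioi 1).eq_empty_or_nonempty with h | h
    · refine ⟨1, one_pos, fun y hy _ => ?_⟩
      by_contra hc
      have : y ∈ Φ ∩ Set.Ioi 1 := ⟨hy, not_le.1 hc⟩
      rw [h] at this; exact this
    · obtain ⟨y0, hy0, hmin⟩ := hf.exists_minimalFor id _ h
      refine ⟨y0 - 1, sub_pos.2 hy0.2, fun y hy hlt => ?_⟩
      by_contra hc
      have h1 : y ∈ Φ ∩ Set.Ioi 1 := ⟨hy, not_le.1 hc⟩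
      have h2 : y ≤ y0 := by linarith
      have := hmin h1 h2
      simp at this
      linarith
  have hbdd : BddAbove (Set.range ρ) := ⟨C, by rintro _ ⟨w, rfl⟩; exact hρC w⟩
  set s := sSup (Set.range ρ) with hs
  have hle : ∀ w, ρ w ≤ s := fun w => le_csSup hbdd ⟨w, rfl⟩
  have hspos : 0 < s := (hρpos []).trans_le (hle [])
  obtain ⟨_, ⟨w0, rfl⟩, hw0⟩ := exists_lt_of_lt_csSup (Set.range_nonempty ρ)
    (show s / (1 + ε) < s from div_lt_self hspos (by linarith))
  have hw0' : s < (1 + ε) * ρ w0 := by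
    rw [div_lt_iff₀ (by linarith)] at hw0; linarith
  have hstep : ∀ w, ρ w = ρ w0 → ∀ j, ρ (j :: w) = ρ w0 := by
    intro w hw
    have h1 : ∀ j, ρ (j :: w) ≤ ρ w := by
      intro j
      have := hgap _ (hratio w j) (by
        rw [div_lt_iff₀ (hρpos w), hw]; exact (hle _).trans_lt hw0')
      rwa [div_le_one (hρpos w)] at this
    have h2 : ∑ j, p j * ρ (j :: w) = ∑ j, p j * ρ w := by
      rw [hρsum, ← Finset.sum_mul, hsum, one_mul]
    have h3 := (Finset.sum_eq_sum_iff_of_le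
      (fun j _ => mul_le_mul_of_nonneg_left (h1 j) (hp j).le)).1 h2
    intro j
    rw [← hw]
    exact mul_left_cancel₀ (hp j).ne' (h3 j (Finset.mem_univ j))
  intro j
  let W : ℕ → List (Fin t) := fun k => List.replicate k j ++ w0
  have hW : ∀ k, W (k+1) = j :: W k := fun k => by simp [W, List.replicate_succ]
  have hWρ : ∀ k, ρ (W k) = ρ w0 := by
    intro k
    induction k with
    | zero => simp [W]
    | succ k ih => rw [hW]; exact hstep _ ih j
  have hWP : ∀ k, ((W k).map p).prod = p j ^ k * (w0.map p).prod := by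
    intro k; simp [W]
  have hWl : Monotone fun k => l (W k) := by
    refine monotone_nat_of_le_succ fun k => ?_
    obtain ⟨e, _, he⟩ := hD (W k) j
    rw [hW, he]; omega
  obtain ⟨k1, k2, hne, heq⟩ : ∃ k1 k2, k1 < k2 ∧ a (W k1) = a (W k2) := by
    obtain ⟨k1, -, k2, -, hne, heq⟩ := Set.infinite_univ.exists_ne_map_eq_of_mapsTo
      (f := fun k => a (W k)) (fun k _ => haS (W k)) hS
    rcases lt_or_gt_of_ne hne with h | h
    · exact ⟨k1, k2, h, heq⟩
    · exact ⟨k2, k1, h, heq.symm⟩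
  have hMk : ∀ k, r ^ l (W k) * a (W k) = p j ^ k * ((w0.map p).prod * ρ w0) := by
    intro k
    rw [← hMa, ← hWρ k]
    simp only [hρ]
    rw [hWP]
    have := (hP w0).ne'
    have := (pow_pos (hp j) k).ne'
    field_simp
  obtain ⟨L, hL⟩ := Nat.exists_eq_add_of_le (hWl hne.le)
  obtain ⟨K, hK⟩ := Nat.exists_eq_add_of_lt hne
  simp only at hL
  have h1 := hMk k1
  have h2 := hMk k2
  rw [← heq, hL, hK, pow_add, mul_right_comm, h1, show k1 + K + 1 = k1 + (K+1) by ring, pow_add] at h2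
  have hpos : 0 < p j ^ k1 * ((w0.map p).prod * ρ w0) :=
    mul_pos (pow_pos (hp j) _) (mul_pos (hP _) (hρpos _))
  have h3 : p j ^ (K+1) = r ^ L := by
    apply mul_left_cancel₀ hpos.ne'
    rw [h2]; ring
  refine ⟨K+1, L, by omega, ?_, h3⟩
  rcases Nat.eq_zero_or_pos L with h | h
  · rw [h, pow_zero] at h3
    have := pow_lt_one₀ (hp j).le (hp1 j) (Nat.succ_ne_zero K)
    rw [Nat.succ_eq_add_one, h3] at this
    exact absurd this (lt_irrefl _)
  · exact h


lemma sim_hausdorff {X Y : Type*} [MetricSpace X] [MetricSpace Y] [MeasurableSpace X]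
    [BorelSpace X] [MeasurableSpace Y] [BorelSpace Y] (g : X → Y) (c s : ℝ) (hc : 0 < c)
    (hs : 0 ≤ s) (hg : ∀ x y, dist (g x) (g y) = c * dist x y) (A : Set X) :
    μH[s] (g '' A) = ENNReal.ofReal (c ^ s) * μH[s] A := by
  have hcc : ((c.toNNReal : NNReal) : ENNReal) ^ s = ENNReal.ofReal (c ^ s) := by
    rw [← ENNReal.ofReal_rpow_of_pos hc]; rfl
  have h1 : LipschitzWith c.toNNReal g := LipschitzWith.of_dist_le_mul fun x y => by
    rw [hg, Real.coe_toNNReal _ hc.le]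
  have h2 : AntilipschitzWith (c.toNNReal)⁻¹ g := AntilipschitzWith.of_le_mul_dist fun x y => by
    rw [hg, NNReal.coe_inv, Real.coe_toNNReal _ hc.le]
    field_simp; exact le_rfl
  apply le_antisymm
  · rw [← hcc]; exact h1.hausdorffMeasure_image_le hs A
  · have h3 := h2.le_hausdorffMeasure_image hs A
    have hne : c.toNNReal ≠ 0 := by simpa using hc
    rw [ENNReal.coe_inv hne, ENNReal.inv_rpow, hcc] at h3
    have hpos : 0 < c ^ s := Real.rpow_pos_of_pos hc s
    calc ENNReal.ofReal (c ^ s) * μH[s] A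
        ≤ ENNReal.ofReal (c ^ s) * ((ENNReal.ofReal (c ^ s))⁻¹ * μH[s] (g '' A)) := by gcongr
      _ = μH[s] (g '' A) := by
        rw [← mul_assoc, ENNReal.mul_inv_cancel (by simpa using hpos) ENNReal.ofReal_ne_top, one_mul]

lemma sim_hausdorff_real {X Y : Type*} [MetricSpace X] [MetricSpace Y] [MeasurableSpace X]
    [BorelSpace X] [MeasurableSpace Y] [BorelSpace Y] (g : X → Y) (c s : ℝ) (hc : 0 < c)
    (hs : 0 ≤ s) (hg : ∀ x y, dist (g x) (g y) = c * dist x y) (A : Set X) :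
    (μH[s]).real (g '' A) = c ^ s * (μH[s]).real A := by
  rw [measureReal_def, sim_hausdorff g c s hc hs hg, ENNReal.toReal_mul,
    ENNReal.toReal_ofReal (by positivity), measureReal_def]

def Gapped (lam ρ : ℝ) (S : Finset ℝ) : Prop :=
  ∀ t ∈ S, ∀ t' ∈ S, t < t' → t' - t = ρ * (1 - lam) ∨ ρ ≤ t' - t

def piece (E : Set ℝ) (ρ t : ℝ) : Set ℝ := (fun x => ρ * x + t) '' E

lemma dist_aff (ρ t : ℝ) (hρ : 0 < ρ) (x y : ℝ) :
    dist (ρ * x + t) (ρ * y + t) = ρ * dist x y := by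
  rw [Real.dist_eq, Real.dist_eq, ← abs_of_pos hρ, ← abs_mul, abs_of_pos hρ]; congr 1; ring

/-- Normal form of the data of the class `A`. -/
structure NF (lam : ℝ) (n m : ℕ) (E : Set ℝ) (B : Finset ℝ) : Prop where
  l0 : 0 < lam
  l1 : lam ≤ 1/2
  zero : 0 ∈ B
  top : 1 - lam ∈ B
  bd : ∀ b ∈ B, 0 ≤ b ∧ b ≤ 1 - lam
  gap : Gapped lam lam B
  card : B.card = n
  ov : (B.filter (fun t => t - lam * (1 - lam) ∈ B)).card = m
  ne : E.Nonempty
  cpt : IsCompact E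
  eq : E = ⋃ b ∈ B, piece E lam b

namespace NF
variable {lam : ℝ} {n m : ℕ} {E : Set ℝ} {B : Finset ℝ}

lemma mem_step (h : NF lam n m E B) {x b : ℝ} (hx : x ∈ E) (hb : b ∈ B) : lam * x + b ∈ E := by
  rw [h.eq]
  exact Set.mem_biUnion hb ⟨x, hx, rfl⟩

lemma exists_step (h : NF lam n m E B) {x : ℝ} (hx : x ∈ E) :
    ∃ b ∈ B, ∃ y ∈ E, x = lam * y + b := by
  rw [h.eq] at hx
  simp only [Set.mem_iUnion, piece] at hx
  obtain ⟨b, hb, y, hy, rfl⟩ := hx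
  exact ⟨b, hb, y, hy, rfl⟩

lemma sub (h : NF lam n m E B) {x : ℝ} (hx : x ∈ E) : 0 ≤ x ∧ x ≤ 1 := by
  have l0 := h.l0
  have l1 := h.l1
  constructor
  · obtain ⟨a, ha, hmin⟩ := h.cpt.exists_isLeast h.ne
    obtain ⟨b, hb, y, hy, e⟩ := h.exists_step ha
    have := hmin hy
    have := hmin hx
    have := (h.bd b hb).1
    nlinarith
  · obtain ⟨a, ha, hmax⟩ := h.cpt.exists_isGreatest h.ne
    obtain ⟨b, hb, y, hy, e⟩ := h.exists_step ha
    have := hmax hy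
    have := hmax hx
    have := (h.bd b hb).2
    nlinarith

lemma iter_top (h : NF lam n m E B) {x : ℝ} (hx : x ∈ E) (k : ℕ) :
    1 - lam ^ k * (1 - x) ∈ E := by
  induction k with
  | zero => simpa using hx
  | succ k ih =>
    have := h.mem_step ih h.top
    convert this using 1
    ring

lemma one_mem (h : NF lam n m E B) : (1:ℝ) ∈ E := by
  obtain ⟨x, hx⟩ := h.ne
  have : Filter.Tendsto (fun k : ℕ => 1 - lam ^ k * (1 - x)) Filter.atTop (nhds (1 - 0 * (1 - x))) := by
    refine Filter.Tendsto.sub tendsto_const_nhds (Filter.Tendsto.mul_const _ ?_)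
    exact tendsto_pow_atTop_nhds_zero_of_lt_one h.l0.le (by linarith [h.l1])
  simp only [zero_mul, sub_zero] at this
  exact h.cpt.isClosed.mem_of_tendsto this (Filter.Eventually.of_forall fun k => h.iter_top hx k)

lemma low (h : NF lam n m E B) {x : ℝ} (hx : x ∈ E) (hxl : x ≤ lam) : ∃ z ∈ E, x = lam * z := by
  have l0 := h.l0
  have l1 := h.l1
  by_contra hcon
  have key : ∀ k : ℕ, ∀ x ∈ E, x ≤ lam → (¬ ∃ z ∈ E, x = lam * z) → lam - x ≤ lam ^ k := by
    intro k
    induction k with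
    | zero =>
      intro x hx _ _
      have := (h.sub hx).1
      simp; linarith
    | succ k ih =>
      intro x hx hxl hcon
      obtain ⟨b, hb, y, hy, e⟩ := h.exists_step hx
      have hy0 := (h.sub hy).1
      rcases (h.bd b hb).1.eq_or_lt with hb0 | hb0
      · exact absurd ⟨y, hy, by rw [e, ← hb0, add_zero]⟩ hcon
      rcases h.gap 0 h.zero b hb hb0 with h1 | h1
      · have hyl : y ≤ lam := by nlinarith
        have hyc : ¬ ∃ z ∈ E, y = lam * z := by
          rintro ⟨z, hz, rfl⟩
          refine hcon ⟨lam * z + (1 - lam), h.mem_step hz h.top, ?_⟩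
          rw [e]; linarith
        have := ih y hy hyl hyc
        rw [pow_succ]
        nlinarith
      · have hx1 : x = lam * 1 := by nlinarith
        exact absurd ⟨1, h.one_mem, hx1⟩ hcon
  have hlim : Filter.Tendsto (fun k : ℕ => lam ^ k) Filter.atTop (nhds 0) :=
    tendsto_pow_atTop_nhds_zero_of_lt_one l0.le (by linarith)
  have : lam - x ≤ 0 := ge_of_tendsto' hlim fun k => key k x hx hxl hcon
  exact hcon ⟨1, h.one_mem, by linarith⟩

lemma piece_cpt (h : NF lam n m E B) (ρ t : ℝ) : IsCompact (piece E ρ t) :=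
  h.cpt.image (by fun_prop)

lemma union_measure (h : NF lam n m E B) (s : ℝ) (hs : 0 < s) (hfin : μH[s] E ≠ ⊤) (ρ : ℝ)
    (hρ : 0 < ρ) (S : Finset ℝ) (hS : Gapped lam ρ S) :
    (μH[s]).real (⋃ t ∈ S, piece E ρ t) = ρ ^ s * (μH[s]).real E *
      (S.card - lam ^ s * ((S.filter (fun t => t - ρ * (1 - lam) ∈ S)).card : ℝ)) := by
  have l0 := h.l0
  have l1 := h.l1
  have hpm : ∀ ρ' : ℝ, 0 < ρ' → ∀ t, (μH[s]).real (piece E ρ' t) = ρ' ^ s * (μH[s]).real E :=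
    fun ρ' hρ' t => sim_hausdorff_real _ ρ' s hρ' hs.le (dist_aff ρ' t hρ') E
  have hpf : ∀ t, μH[s] (piece E ρ t) ≠ ⊤ := fun t => by
    rw [piece, sim_hausdorff _ ρ s hρ hs.le (dist_aff ρ t hρ)]
    exact ENNReal.mul_ne_top ENNReal.ofReal_ne_top hfin
  have := Measure.nullSingletonClass_hausdorff ℝ hs
  induction S using Finset.induction_on_max with
  | empty => simp
  | insert a S hmax ih =>
    have haS : a ∉ S := fun ha => lt_irrefl _ (hmax a ha)
    have hS' : Gapped lam ρ S := fun t ht t' ht' => hS t (Finset.mem_insert_of_mem ht) t'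
      (Finset.mem_insert_of_mem ht')
    have ih := ih hS'
    set U := ⋃ t ∈ S, piece E ρ t with hU
    have hUc : IsCompact U := S.isCompact_biUnion fun t _ => h.piece_cpt ρ t
    have hUf : μH[s] U ≠ ⊤ := by
      refine ((measure_biUnion_finset_le S _).trans_lt ?_).ne
      exact ENNReal.sum_lt_top.2 fun t _ => (hpf t).lt_top
    have hun : (⋃ t ∈ insert a S, piece E ρ t) = piece E ρ a ∪ U := by
      rw [Finset.set_biUnion_insert]
    have hie := measureReal_union_add_inter (μ := μH[s]) (s := piece E ρ a) (t := U)
      hUc.isClosed.measurableSet (hpf a) hUf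
    rw [hun]
    -- points of intersection
    have hpt : ∀ t ∈ S, t ≠ a - ρ * (1 - lam) → piece E ρ a ∩ piece E ρ t ⊆ {a} := by
      rintro t ht hne y ⟨⟨x, hx, rfl⟩, ⟨x', hx', e⟩⟩
      have h1 := hS t (Finset.mem_insert_of_mem ht) a (Finset.mem_insert_self _ _) (hmax t ht)
      rcases h1 with h1 | h1
      · exact absurd (by linarith) hne
      · have := (h.sub hx).1
        have := (h.sub hx').2
        simp only at e ⊢
        simp only [Set.mem_singleton_iff]
        nlinarith
    by_cases hc : a - ρ * (1 - lam) ∈ S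
    · have hfc : ((insert a S).filter (fun t => t - ρ * (1 - lam) ∈ insert a S)) =
          insert a (S.filter (fun t => t - ρ * (1 - lam) ∈ S)) := by
        ext t
        simp only [Finset.mem_filter, Finset.mem_insert]
        constructor
        · rintro ⟨rfl | ht, h2⟩
          · exact Or.inl rfl
          · refine Or.inr ⟨ht, h2.resolve_left ?_⟩
            have := hmax t ht
            have : 0 < ρ * (1 - lam) := mul_pos hρ (by linarith)
            intro h3; linarith
        · rintro (rfl | ⟨ht, h2⟩)
          · exact ⟨Or.inl rfl, Or.inr hc⟩
          · exact ⟨Or.inr ht, Or.inr h2⟩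
      have hint : (μH[s]).real (piece E ρ a ∩ U) = (ρ * lam) ^ s * (μH[s]).real E := by
        rw [← hpm (ρ * lam) (mul_pos hρ l0) a]
        have h1 : piece E (ρ * lam) a ⊆ piece E ρ a ∩ U := by
          rintro _ ⟨z, hz, rfl⟩
          refine ⟨⟨lam * z + 0, h.mem_step hz h.zero, by simp; ring⟩, ?_⟩
          refine Set.mem_biUnion hc ⟨lam * z + (1 - lam), h.mem_step hz h.top, by simp; ring⟩
        have h2 : piece E ρ a ∩ U ⊆ piece E (ρ * lam) a ∪ {a} := by
          rintro y ⟨hya, hyU⟩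
          simp only [hU, Set.mem_iUnion] at hyU
          obtain ⟨t, ht, hyt⟩ := hyU
          by_cases htc : t = a - ρ * (1 - lam)
          · left
            obtain ⟨x, hx, rfl⟩ := hya
            obtain ⟨x', hx', e⟩ := hyt
            simp only at e
            have hxx : x' = x + (1 - lam) := by
              rw [htc] at e
              apply mul_left_cancel₀ hρ.ne'
              linarith
            have : x ≤ lam := by linarith [(h.sub hx').2]
            obtain ⟨z, hz, rfl⟩ := h.low hx this
            exact ⟨z, hz, by simp; ring⟩
          · right
            exact hpt t ht htc ⟨hya, hyt⟩
        rw [measureReal_def, measureReal_def]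
        congr 1
        apply le_antisymm
        · refine (measure_mono h2).trans ((measure_union_le _ _).trans ?_)
          simp
        · exact measure_mono h1
      rw [hfc, Finset.card_insert_of_notMem haS, Finset.card_insert_of_notMem (by simp [haS])]
      rw [hpm ρ hρ, hint, ih] at hie
      rw [Real.mul_rpow hρ.le l0.le] at hie
      push_cast
      linear_combination hie
    · have hfc : ((insert a S).filter (fun t => t - ρ * (1 - lam) ∈ insert a S)) =
          (S.filter (fun t => t - ρ * (1 - lam) ∈ S)) := by
        have hp : 0 < ρ * (1 - lam) := mul_pos hρ (by linarith)
        ext t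
        simp only [Finset.mem_filter, Finset.mem_insert]
        constructor
        · rintro ⟨rfl | ht, h2⟩
          · rcases h2 with h2 | h2
            · linarith
            · exact absurd h2 hc
          · refine ⟨ht, h2.resolve_left ?_⟩
            have := hmax t ht
            intro h3; linarith
        · rintro ⟨ht, h2⟩
          exact ⟨Or.inr ht, Or.inr h2⟩
      have hint : (μH[s]).real (piece E ρ a ∩ U) = 0 := by
        have h2 : piece E ρ a ∩ U ⊆ {a} := by
          rintro y ⟨hya, hyU⟩
          simp only [hU, Set.mem_iUnion] at hyU
          obtain ⟨t, ht, hyt⟩ := hyU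
          exact hpt t ht (fun h => hc (h ▸ ht)) ⟨hya, hyt⟩
        rw [measureReal_def, measure_mono_null h2 (by simp)]; simp
      rw [hfc, Finset.card_insert_of_notMem haS]
      rw [hpm ρ hρ, hint, ih] at hie
      push_cast
      linear_combination hie

lemma quad (h : NF lam n m E B) (s : ℝ) (hs : 0 < s) (hfin : μH[s] E ≠ ⊤)
    (hpos : μH[s] E ≠ 0) : 1 = n * lam ^ s - m * (lam ^ s) ^ 2 := by
  have h1 := h.union_measure s hs hfin lam h.l0 B h.gap
  rw [← h.eq, h.card, h.ov] at h1
  have hE : 0 < (μH[s]).real E := ENNReal.toReal_pos hpos hfin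
  apply mul_left_cancel₀ hE.ne'
  linear_combination h1

end NF

/-- left endpoints of level `l` cylinders -/
noncomputable def T (lam : ℝ) (B : Finset ℝ) : ℕ → Finset ℝ
  | 0 => {0}
  | l+1 => Finset.image₂ (fun t b => t + lam ^ l * b) (T lam B l) B

namespace NF
variable {lam : ℝ} {n m : ℕ} {E : Set ℝ} {B : Finset ℝ}

lemma T_gap (h : NF lam n m E B) (l : ℕ) : Gapped lam (lam ^ l) (T lam B l) := by
  have l0 := h.l0
  have l1 := h.l1
  induction l with
  | zero =>
    intro t ht t' ht' hlt
    simp [T] at ht ht'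
    subst ht ht'
    exact absurd hlt (lt_irrefl _)
  | succ l ih =>
    have hp : 0 < lam ^ l := pow_pos l0 l
    have sib : ∀ b ∈ B, ∀ b' ∈ B, b < b' →
        lam ^ l * (b' - b) = lam ^ (l+1) * (1 - lam) ∨ lam ^ (l+1) ≤ lam ^ l * (b' - b) := by
      intro b hb b' hb' hlt
      rcases h.gap b hb b' hb' hlt with h1 | h1
      · left; rw [h1]; ring
      · right; rw [pow_succ]; exact mul_le_mul_of_nonneg_left h1 hp.le
    have main : ∀ t ∈ T lam B l, ∀ t' ∈ T lam B l, t < t' → ∀ b ∈ B, ∀ b' ∈ B,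
        t + lam ^ l * b < t' + lam ^ l * b' →
        t' + lam ^ l * b' - (t + lam ^ l * b) = lam ^ (l+1) * (1 - lam) ∨
        lam ^ (l+1) ≤ t' + lam ^ l * b' - (t + lam ^ l * b) := by
      intro t ht t' ht' htt b hb b' hb' hlt
      have hb1 := h.bd b hb
      have hb1' := h.bd b' hb'
      rcases ih t ht t' ht' htt with h1 | h1
      · rcases hb1.2.eq_or_lt with h2 | h2
        · -- b is top
          have e : t' + lam ^ l * b' - (t + lam ^ l * b) = lam ^ l * (b' - 0) := by
            rw [h2]; linear_combination h1
          rw [e]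
          have : 0 < b' := by
            have : 0 < lam ^ l * (b' - 0) := by rw [← e]; linarith
            simpa using pos_of_mul_pos_right this hp.le
          exact sib 0 h.zero b' hb' this
        · rcases hb1'.1.eq_or_lt with h3 | h3
          · have e : t' + lam ^ l * b' - (t + lam ^ l * b) = lam ^ l * ((1 - lam) - b) := by
              rw [← h3]; linear_combination h1
            rw [e]
            exact sib b hb _ h.top h2
          · right
            have g1 : lam * (1 - lam) ≤ b' := by
              rcases h.gap 0 h.zero b' hb' h3 with h4 | h4 <;> nlinarith
            have g2 : lam * (1 - lam) ≤ 1 - lam - b := by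
              rcases h.gap b hb _ h.top h2 with h4 | h4 <;> nlinarith
            have e : t' + lam ^ l * b' - (t + lam ^ l * b) = lam ^ l * ((1 - lam) - b + b') := by
              linear_combination h1
            rw [e, pow_succ]
            apply mul_le_mul_of_nonneg_left _ hp.le
            nlinarith
      · right
        rw [pow_succ]
        have : lam ^ l * b ≤ lam ^ l * (1 - lam) := mul_le_mul_of_nonneg_left hb1.2 hp.le
        have : 0 ≤ lam ^ l * b' := mul_nonneg hp.le hb1'.1
        linarith
    intro u hu u' hu' hlt
    simp only [T, Finset.mem_image₂] at hu hu'
    obtain ⟨t, ht, b, hb, rfl⟩ := hu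
    obtain ⟨t', ht', b', hb', rfl⟩ := hu'
    rcases lt_trichotomy t t' with h1 | h1 | h1
    · exact main t ht t' ht' h1 b hb b' hb' hlt
    · subst h1
      have e : t + lam ^ l * b' - (t + lam ^ l * b) = lam ^ l * (b' - b) := by ring
      rw [e]
      have : 0 < b' - b := by
        have : 0 < lam ^ l * (b' - b) := by rw [← e]; linarith
        exact pos_of_mul_pos_right this hp.le
      exact sib b hb b' hb' (by linarith)
    · -- t' < t but order reversed
      have hb1 := h.bd b hb
      have hb1' := h.bd b' hb'
      rcases ih t' ht' t ht h1 with h2 | h2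
      · exfalso
        have : lam ^ l * b' ≤ lam ^ l * (1 - lam) := mul_le_mul_of_nonneg_left hb1'.2 hp.le
        have : 0 ≤ lam ^ l * b := mul_nonneg hp.le hb1.1
        linarith
      · exfalso
        have : lam ^ l * b' ≤ lam ^ l * (1 - lam) := mul_le_mul_of_nonneg_left hb1'.2 hp.le
        have : 0 ≤ lam ^ l * b := mul_nonneg hp.le hb1.1
        nlinarith

lemma T_cover (h : NF lam n m E B) (l : ℕ) : ∀ x, x ∈ E ↔ ∃ t ∈ T lam B l, x ∈ piece E (lam ^ l) t := by
  induction l with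
  | zero => intro x; simp [T, piece]
  | succ l ih =>
    intro x
    rw [ih x]
    constructor
    · rintro ⟨t, ht, y, hy, rfl⟩
      obtain ⟨b, hb, z, hz, rfl⟩ := h.exists_step hy
      refine ⟨t + lam ^ l * b, Finset.mem_image₂_of_mem ht hb, z, hz, ?_⟩
      simp only; ring
    · rintro ⟨t, ht, y, hy, rfl⟩
      simp only [T, Finset.mem_image₂] at ht
      obtain ⟨t, ht, b, hb, rfl⟩ := ht
      refine ⟨t, ht, lam * y + b, h.mem_step hy hb, ?_⟩
      simp only; ring

lemma clopen_measure (h : NF lam n m E B) (s : ℝ) (hs : 0 < s) (hfin : μH[s] E ≠ ⊤) (D : ℝ) :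
    ∃ N : ℕ, ∀ (l : ℕ) (A : Set ℝ), A ⊆ E → A.Nonempty →
      (∀ x ∈ A, ∀ y ∈ E, y ∉ A → lam ^ l < dist x y) →
      (∀ x ∈ A, ∀ y ∈ A, dist x y ≤ D * lam ^ l) →
      ∃ a ≤ N, ∃ b ≤ N, (μH[s]).real A =
        (lam ^ s) ^ l * ((μH[s]).real E * ((a:ℝ) - lam ^ s * (b:ℝ))) := by
  have l0 := h.l0
  have l1 := h.l1
  refine ⟨(Finset.Icc (-⌈2 * (D + 1)⌉ : ℤ) ⌈2 * (D + 1)⌉).card, ?_⟩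
  intro l A hAE hAne hsep hdiam
  have hp : 0 < lam ^ l := pow_pos l0 l
  classical
  set S := (T lam B l).filter (fun t => (piece E (lam ^ l) t ∩ A).Nonempty) with hS
  have hSg : Gapped lam (lam ^ l) S := fun t ht t' ht' =>
    h.T_gap l t (Finset.mem_filter.1 ht).1 t' (Finset.mem_filter.1 ht').1
  have hAS : A = ⋃ t ∈ S, piece E (lam ^ l) t := by
    ext x
    simp only [Set.mem_iUnion]
    constructor
    · intro hx
      obtain ⟨t, ht, hxt⟩ := (h.T_cover l x).1 (hAE hx)
      exact ⟨t, Finset.mem_filter.2 ⟨ht, x, hxt, hx⟩, hxt⟩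
    · rintro ⟨t, ht, hxt⟩
      obtain ⟨htT, y, hyt, hyA⟩ := Finset.mem_filter.1 ht
      by_contra hxA
      have h1 := hsep y hyA x ((h.T_cover l x).2 ⟨t, htT, hxt⟩) hxA
      obtain ⟨u, hu, rfl⟩ := hxt
      obtain ⟨v, hv, rfl⟩ := hyt
      rw [dist_aff _ _ hp] at h1
      have : dist v u ≤ 1 := by
        rw [Real.dist_eq, abs_le]
        have := h.sub hu
        have := h.sub hv
        constructor <;> linarith
      nlinarith
  have hcard : S.card ≤ (Finset.Icc (-⌈2 * (D + 1)⌉ : ℤ) ⌈2 * (D + 1)⌉).card := by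
    obtain ⟨x0, hx0⟩ := hAne
    -- each left endpoint is near x0
    have hnear : ∀ t ∈ S, |t - x0| ≤ (D + 1) * lam ^ l := by
      intro t ht
      obtain ⟨htT, y, hyt, hyA⟩ := Finset.mem_filter.1 ht
      have h1 := hdiam y hyA x0 hx0
      obtain ⟨v, hv, rfl⟩ := hyt
      have := h.sub hv
      rw [Real.dist_eq, abs_le] at h1
      simp only at h1
      have h2 : 0 ≤ lam ^ l * v := by nlinarith
      have h3 : lam ^ l * v ≤ lam ^ l := by nlinarith
      rw [abs_le]
      constructor <;> linarith
    refine Finset.card_le_card_of_injOn (fun t => ⌊2 * ((t - x0) / lam ^ l)⌋) ?_ ?_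
    · intro t ht
      have h1 := hnear t ht
      have h2 : |(t - x0) / lam ^ l| ≤ D + 1 := by
        rw [abs_div, abs_of_pos hp, div_le_iff₀ hp]; exact h1
      rw [abs_le] at h2
      simp only [Finset.coe_Icc, Set.mem_Icc]
      constructor
      · rw [Int.le_floor]
        push_cast
        have := Int.le_ceil (2 * (D + 1))
        linarith
      · have h3 : (⌊2 * ((t - x0) / lam ^ l)⌋ : ℝ) ≤ ⌈2 * (D + 1)⌉ := by
          have := Int.le_ceil (2 * (D + 1))
          have := Int.floor_le (2 * ((t - x0) / lam ^ l))
          linarith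
        exact_mod_cast h3
    · have aux : ∀ t ∈ S, ∀ t' ∈ S, t < t' →
          ⌊2 * ((t - x0) / lam ^ l)⌋ = ⌊2 * ((t' - x0) / lam ^ l)⌋ → False := by
        intro t ht t' ht' hlt he
        have h1 : lam ^ l / 2 ≤ t' - t := by
          rcases hSg t ht t' ht' hlt with h1 | h1 <;> nlinarith
        have h2 := Int.abs_sub_lt_one_of_floor_eq_floor he
        rw [abs_lt] at h2
        have h3 : 2 * ((t - x0) / lam ^ l) - 2 * ((t' - x0) / lam ^ l) = - (2 * (t' - t) / lam ^ l) := by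
          field_simp; ring
        rw [h3] at h2
        have : 1 ≤ 2 * (t' - t) / lam ^ l := by rw [le_div_iff₀ hp]; linarith
        linarith [h2.1]
      intro t ht t' ht' he
      rcases lt_trichotomy t t' with h1 | h1 | h1
      · exact (aux t ht t' ht' h1 he).elim
      · exact h1
      · exact (aux t' ht' t ht h1 he.symm).elim
  refine ⟨S.card, hcard, (S.filter (fun t => t - lam ^ l * (1 - lam) ∈ S)).card,
    (Finset.card_filter_le _ _).trans hcard, ?_⟩
  conv_lhs => rw [hAS]
  rw [h.union_measure s hs hfin _ hp S hSg]
  rw [← Real.rpow_natCast, ← Real.rpow_mul l0.le, mul_comm (l:ℝ) s, Real.rpow_mul l0.le,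
    Real.rpow_natCast]
  ring

end NF

lemma exists_NF (lam : ℝ) (n m : ℕ) (E : Set ℝ) (hE : IsInClassA lam n m E) :
    ∃ B, NF lam n m E B := by
  obtain ⟨⟨l0, l1⟩, hm, hmn, b, hb0, hbn, hmono, hgap, hcard, hne, hcpt, heq⟩ := hE
  have hmn' : ∀ j, j < n → ∀ i, i < j → b i < b j := by
    intro j
    induction j with
    | zero => intro _ i hi; omega
    | succ j ih =>
      intro hj i hi
      have h1 := hmono j hj
      rcases Nat.lt_succ_iff_lt_or_eq.1 hi with h2 | h2
      · exact (ih (by omega) i h2).trans h1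
      · rw [h2]; exact h1
  have hinj : ∀ i, i < n → ∀ j, j < n → b i = b j → i = j := by
    intro i hi j hj h
    rcases lt_trichotomy i j with h1 | h1 | h1
    · exact absurd h (hmn' j hj i h1).ne
    · exact h1
    · exact absurd h (hmn' i hi j h1).ne'
  have hvol : ∀ i, i + 1 < n →
      volume (Set.Icc (b i) (b i + lam) ∩ Set.Icc (b (i + 1)) (b (i + 1) + lam)) =
      ENNReal.ofReal (lam - (b (i+1) - b i)) := by
    intro i hi
    have := hmono i hi
    rw [Set.Icc_inter_Icc, sup_eq_right.2 this.le, inf_eq_left.2 (by linarith), Real.volume_Icc]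
    congr 1; ring
  have hov : ∀ i, i + 1 < n →
      (volume (Set.Icc (b i) (b i + lam) ∩ Set.Icc (b (i + 1)) (b (i + 1) + lam)) =
        ENNReal.ofReal (lam * lam) ↔ b (i+1) - b i = lam * (1 - lam)) := by
    intro i hi
    rw [hvol i hi]
    constructor
    · intro h
      have hpos : 0 < lam * lam := mul_pos l0 l0
      have h2 : 0 < lam - (b (i+1) - b i) := by
        by_contra hc
        rw [ENNReal.ofReal_of_nonpos (not_lt.1 hc)] at h
        have := ENNReal.ofReal_pos.2 hpos
        rw [← h] at this
        exact lt_irrefl _ this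
      rw [ENNReal.ofReal_eq_ofReal_iff h2.le hpos.le] at h
      linarith
    · intro h; rw [h]; congr 1; ring
  have hgap1 : ∀ i, i + 1 < n → b (i+1) - b i = lam * (1 - lam) ∨ lam ≤ b (i+1) - b i := by
    intro i hi
    rcases lt_or_ge (b (i+1) - b i) lam with h | h
    · left
      have h1 := hmono i hi
      rcases hgap i hi ⟨b (i+1), ⟨h1.le, by linarith⟩, ⟨le_rfl, by linarith⟩⟩ with h2 | h2
      · rw [hvol i hi, ENNReal.ofReal_eq_zero] at h2
        linarith
      · exact (hov i hi).1 h2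
    · exact Or.inr h
  -- there is a large gap
  have hbig : ∃ i, i + 1 < n ∧ lam ≤ b (i+1) - b i := by
    by_contra hcon
    push Not at hcon
    have : {i : ℕ | i + 1 < n ∧
      volume (Set.Icc (b i) (b i + lam) ∩ Set.Icc (b (i + 1)) (b (i + 1) + lam)) =
        ENNReal.ofReal (lam * lam)} = (Finset.range (n - 1) : Set ℕ) := by
      ext i
      simp only [Set.mem_setOf_eq, Finset.coe_range, Set.mem_Iio]
      constructor
      · rintro ⟨h, _⟩; omega
      · intro h
        have hi : i + 1 < n := by omega
        refine ⟨hi, (hov i hi).2 ((hgap1 i hi).resolve_right ?_)⟩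
        exact not_le.2 (hcon i hi)
    rw [this, Set.ncard_coe_finset, Finset.card_range] at hcard
    omega
  have hbd : ∀ i, i < n → 0 ≤ b i ∧ b i ≤ 1 - lam := by
    intro i hi
    constructor
    · rw [← hb0]
      rcases Nat.eq_zero_or_pos i with h | h
      · rw [h]
      · exact (hmn' i hi 0 h).le
    · rw [← hbn]
      rcases (Nat.le_sub_one_of_lt hi).eq_or_lt with h | h
      · rw [← h]
      · exact (hmn' (n-1) (by omega) i h).le
  have lhalf : lam ≤ 1/2 := by
    obtain ⟨i, hi, h⟩ := hbig
    have := (hbd i (by omega)).1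
    have := (hbd (i+1) hi).2
    linarith
  have hgpos : 0 < lam * (1 - lam) := mul_pos l0 (by linarith)
  have hgmin : ∀ i, i + 1 < n → lam * (1 - lam) ≤ b (i+1) - b i := by
    intro i hi
    rcases hgap1 i hi with h | h
    · exact h.ge
    · nlinarith
  have hfar : ∀ i j, i + 2 ≤ j → j < n → 2 * (lam * (1 - lam)) ≤ b j - b i := by
    intro i j hij hj
    have h1 := hgmin i (by omega)
    have h2 := hgmin (i+1) (by omega)
    have h3 : b (i+2) ≤ b j := by
      rcases hij.eq_or_lt with h | h
      · rw [h]
      · exact (hmn' j hj _ h).le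
    have e : b (i + 1 + 1) = b (i+2) := rfl
    rw [e] at h2
    linarith
  refine ⟨(Finset.range n).image b, ?_⟩
  constructor
  · exact l0
  · exact lhalf
  · exact Finset.mem_image.2 ⟨0, Finset.mem_range.2 (by omega), hb0⟩
  · exact Finset.mem_image.2 ⟨n-1, Finset.mem_range.2 (by omega), hbn⟩
  · intro x hx
    obtain ⟨i, hi, rfl⟩ := Finset.mem_image.1 hx
    exact hbd i (Finset.mem_range.1 hi)
  · intro x hx y hy hxy
    obtain ⟨i, hi, rfl⟩ := Finset.mem_image.1 hx
    obtain ⟨j, hj, rfl⟩ := Finset.mem_image.1 hy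
    rw [Finset.mem_range] at hi hj
    have hij : i < j := by
      by_contra hc
      rcases (not_lt.1 hc).eq_or_lt with h | h
      · rw [h] at hxy; exact lt_irrefl _ hxy
      · exact lt_asymm hxy (hmn' i hi j h)
    rcases (Nat.succ_le_of_lt hij).eq_or_lt with h | h
    · rw [← h]; exact hgap1 i (by omega)
    · right
      have := hfar i j h hj
      nlinarith
  · rw [Finset.card_image_of_injOn, Finset.card_range]
    intro i hi j hj h
    exact hinj i (by simpa using hi) j (by simpa using hj) h
  · rw [← hcard, ← Set.ncard_coe_finset]
    symm
    refine Set.ncard_congr (fun i _ => b (i+1)) ?_ ?_ ?_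
    · rintro i ⟨hi, h⟩
      rw [hov i hi] at h
      simp only [Finset.coe_filter, Set.mem_setOf_eq, Finset.mem_image, Finset.mem_range]
      exact ⟨⟨i+1, hi, rfl⟩, ⟨i, by omega, by linarith⟩⟩
    · rintro i j ⟨hi, _⟩ ⟨hj, _⟩ h
      have := hinj _ hi _ hj h
      omega
    · intro x hx
      simp only [Finset.coe_filter, Set.mem_setOf_eq, Finset.mem_image, Finset.mem_range] at hx
      obtain ⟨⟨j, hj, rfl⟩, ⟨i, hi, he⟩⟩ := hx
      have hij : i < j := by
        by_contra hc
        rcases (not_lt.1 hc).eq_or_lt with h | h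
        · rw [h] at he; linarith
        · have := hmn' i hi j h; linarith
      have hj1 : j = i + 1 := by
        by_contra hc
        have := hfar i j (by omega) hj
        linarith
      subst hj1
      exact ⟨i, ⟨hj, (hov i hj).2 (by linarith)⟩, rfl⟩
  · exact hne
  · exact hcpt
  · conv_lhs => rw [heq]
    ext x
    simp [piece]

/-- Data of a dust-like set. -/
structure DL {Y : Type*} [MetricSpace Y] (F : Set Y) (t : ℕ) (g : Fin t → Y → Y)
    (r : Fin t → ℝ) : Prop where
  ne : F.Nonempty
  cpt : IsCompact F
  ht : 2 ≤ t
  rr : ∀ j, 0 < r j ∧ r j < 1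
  sim : ∀ j x y, dist (g j x) (g j y) = r j * dist x y
  eq : F = ⋃ j, g j '' F
  disj : ∀ j j', j ≠ j' → Disjoint (g j '' F) (g j' '' F)

/-- composition along a (reversed) word -/
def Gw {Y : Type*} {t : ℕ} (g : Fin t → Y → Y) : List (Fin t) → Y → Y
  | [] => id
  | j :: w => Gw g w ∘ g j

namespace DL
variable {Y : Type*} [MetricSpace Y] {F : Set Y} {t : ℕ} {g : Fin t → Y → Y} {r : Fin t → ℝ}

lemma rw_pos (h : DL F t g r) (w : List (Fin t)) : 0 < (w.map r).prod ∧ (w.map r).prod ≤ 1 := by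
  induction w with
  | nil => simp
  | cons j w ih =>
    have := h.rr j
    simp only [List.map_cons, List.prod_cons]
    exact ⟨mul_pos this.1 ih.1, mul_le_one₀ this.2.le ih.1.le ih.2⟩

lemma Gsim (h : DL F t g r) (w : List (Fin t)) (x y : Y) :
    dist (Gw g w x) (Gw g w y) = (w.map r).prod * dist x y := by
  induction w generalizing x y with
  | nil => simp [Gw]
  | cons j w ih => simp [Gw, ih, h.sim]; ring

lemma Ginj (h : DL F t g r) (w : List (Fin t)) : Function.Injective (Gw g w) := by
  intro x y hxy
  have := h.Gsim w x y
  rw [hxy, dist_self] at this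
  have hp := (h.rw_pos w).1
  exact dist_eq_zero.1 ((mul_eq_zero.1 this.symm).resolve_left hp.ne')

lemma mem_step (h : DL F t g r) (j : Fin t) {x : Y} (hx : x ∈ F) : g j x ∈ F := by
  rw [h.eq]; exact Set.mem_iUnion.2 ⟨j, x, hx, rfl⟩

lemma Gsplit (h : DL F t g r) (w : List (Fin t)) :
    Gw g w '' F = ⋃ j, Gw g (j :: w) '' F := by
  conv_lhs => rw [h.eq]
  rw [Set.image_iUnion]
  simp [Gw, Set.image_comp]

lemma Gsub (h : DL F t g r) (w : List (Fin t)) : Gw g w '' F ⊆ F := by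
  induction w with
  | nil => simp [Gw]
  | cons j w ih =>
    refine Set.Subset.trans ?_ ih
    rw [h.Gsplit w]
    exact Set.subset_iUnion (fun j => Gw g (j :: w) '' F) j

lemma Gdisj (h : DL F t g r) (w : List (Fin t)) (i j : Fin t) (hij : i ≠ j) :
    Disjoint (Gw g (i :: w) '' F) (Gw g (j :: w) '' F) := by
  simp only [Gw, Set.image_comp]
  exact (Set.disjoint_image_iff (h.Ginj w)).2 (h.disj i j hij)

lemma gcont (h : DL F t g r) (j : Fin t) : Continuous (g j) := by
  have : LipschitzWith (r j).toNNReal (g j) := LipschitzWith.of_dist_le_mul fun x y => by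
    rw [h.sim, Real.coe_toNNReal _ (h.rr j).1.le]
  exact this.continuous

lemma Gcont (h : DL F t g r) (w : List (Fin t)) : Continuous (Gw g w) := by
  induction w with
  | nil => exact continuous_id
  | cons j w ih => exact ih.comp (h.gcont j)

lemma sep (h : DL F t g r) : ∃ δ > 0, ∀ i j, i ≠ j → ∀ x ∈ g i '' F, ∀ y ∈ g j '' F,
    δ ≤ dist x y := by
  have h1 : ∀ q : Fin t × Fin t, ∃ δ > 0, q.1 ≠ q.2 → ∀ x ∈ g q.1 '' F, ∀ y ∈ g q.2 '' F,
      δ ≤ dist x y := by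
    rintro ⟨i, j⟩
    by_cases hij : i = j
    · exact ⟨1, one_pos, fun hc => absurd hij hc⟩
    · obtain ⟨δ, hδ, hd⟩ := Metric.exists_pos_forall_lt_edist (h.cpt.image (h.gcont i))
        (h.cpt.image (h.gcont j)).isClosed (h.disj i j hij)
      refine ⟨δ, hδ, fun _ x hx y hy => ?_⟩
      have := hd x hx y hy
      rw [edist_nndist] at this
      have : δ < nndist x y := by exact_mod_cast this
      exact_mod_cast this.le
  choose δ hδ hd using h1
  have : Nonempty (Fin t) := ⟨⟨0, by have := h.ht; omega⟩⟩
  refine ⟨Finset.univ.inf' Finset.univ_nonempty δ, ?_, ?_⟩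
  · simp [Finset.lt_inf'_iff]; exact fun a b => hδ (a, b)
  · intro i j hij x hx y hy
    exact (Finset.inf'_le _ (Finset.mem_univ (i, j))).trans (hd (i, j) hij x hx y hy)

lemma Gsep (h : DL F t g r) {δ : ℝ} (hδ : 0 < δ) (hd : ∀ i j, i ≠ j → ∀ x ∈ g i '' F,
    ∀ y ∈ g j '' F, δ ≤ dist x y) (w : List (Fin t)) :
    ∀ x ∈ Gw g w '' F, ∀ y ∈ F, y ∉ Gw g w '' F → δ * (w.map r).prod ≤ dist x y := by
  induction w with
  | nil => intro x _ y hy hn; exact absurd (by simpa [Gw] using hy) hn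
  | cons j w ih =>
    intro x hx y hy hn
    have hr := h.rr j
    have hw := h.rw_pos w
    simp only [List.map_cons, List.prod_cons]
    have hle : δ * (r j * (w.map r).prod) ≤ δ * (w.map r).prod := by
      apply mul_le_mul_of_nonneg_left _ hδ.le
      nlinarith
    have hxw : x ∈ Gw g w '' F := by
      rw [h.Gsplit w]; exact Set.mem_iUnion.2 ⟨j, hx⟩
    by_cases hyw : y ∈ Gw g w '' F
    · rw [h.Gsplit w] at hyw
      obtain ⟨i, hi⟩ := Set.mem_iUnion.1 hyw
      have hij : j ≠ i := by rintro rfl; exact hn hi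
      simp only [Gw, Set.image_comp] at hx hi
      obtain ⟨x', hx', rfl⟩ := hx
      obtain ⟨y', hy', rfl⟩ := hi
      rw [h.Gsim]
      have := hd j i hij x' hx' y' hy'
      nlinarith
    · exact hle.trans (ih x hxw y hy hyw)

lemma exists_dim (h : DL F t g r) : ∃ s : ℝ, 0 < s ∧ ∑ j, r j ^ s = 1 := by
  have : Nonempty (Fin t) := ⟨⟨0, by have := h.ht; omega⟩⟩
  have hcont : Continuous (fun s : ℝ => ∑ j, r j ^ s) := by
    refine continuous_finsetSum _ fun j _ => ?_
    exact Real.continuous_const_rpow (h.rr j).1.ne'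
  have hlim : Filter.Tendsto (fun s : ℝ => ∑ j, r j ^ s) Filter.atTop (nhds (∑ j : Fin t, 0)) := by
    refine tendsto_finsetSum _ fun j _ => ?_
    exact tendsto_rpow_atTop_of_base_lt_one _ (by linarith [(h.rr j).1]) (h.rr j).2
  simp only [Finset.sum_const_zero] at hlim
  obtain ⟨s1, hs1, hs1'⟩ := ((hlim.eventually (gt_mem_nhds (one_pos (α := ℝ)))).and
    (Filter.eventually_gt_atTop 0)).exists
  have h0 : (1:ℝ) < ∑ j, r j ^ (0:ℝ) := by
    simp
    have := h.ht
    omega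
  obtain ⟨s, hs, he⟩ := intermediate_value_Icc' hs1'.le hcont.continuousOn
    (show (1:ℝ) ∈ Set.Icc (∑ j, r j ^ s1) (∑ j, r j ^ (0:ℝ)) from ⟨hs1.le, h0.le⟩)
  refine ⟨s, ?_, he⟩
  rcases hs.1.eq_or_lt with h1 | h1
  · rw [← h1] at he; simp only at he; linarith
  · exact h1

end DL

namespace DL
variable {Y : Type*} [MetricSpace Y] {F : Set Y} {t : ℕ} {g : Fin t → Y → Y} {r : Fin t → ℝ}

lemma prod_rpow (h : DL F t g r) (s : ℝ) (w : List (Fin t)) :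
    (w.map (fun j => r j ^ s)).prod = ((w.map r).prod) ^ s := by
  induction w with
  | nil => simp
  | cons j w ih =>
    simp only [List.map_cons, List.prod_cons, ih]
    rw [Real.mul_rpow (h.rr j).1.le (h.rw_pos w).1.le]

lemma exists_max (h : DL F t g r) : ∃ q : ℝ, 0 < q ∧ q < 1 ∧ ∀ j, r j ≤ q := by
  have : Nonempty (Fin t) := ⟨⟨0, by have := h.ht; omega⟩⟩
  refine ⟨Finset.univ.sup' Finset.univ_nonempty r, ?_, ?_, ?_⟩
  · rw [Finset.lt_sup'_iff]
    exact ⟨Classical.arbitrary _, Finset.mem_univ _, (h.rr _).1⟩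
  · rw [Finset.sup'_lt_iff]; exact fun j _ => (h.rr j).2
  · intro j; exact Finset.le_sup' r (Finset.mem_univ j)

lemma prod_le (h : DL F t g r) {q : ℝ} (hq0 : 0 < q) (hq : ∀ j, r j ≤ q) (w : List (Fin t)) :
    (w.map r).prod ≤ q ^ w.length := by
  induction w with
  | nil => simp
  | cons j w ih =>
    simp only [List.map_cons, List.prod_cons, List.length_cons, pow_succ']
    exact mul_le_mul (hq j) ih (h.rw_pos w).1.le hq0.le

lemma cover (h : DL F t g r) (k : ℕ) : F ⊆ ⋃ f : Fin k → Fin t, Gw g (List.ofFn f) '' F := by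
  induction k with
  | zero => intro x hx; exact Set.mem_iUnion.2 ⟨Fin.elim0, by simpa [Gw] using hx⟩
  | succ k ih =>
    intro x hx
    obtain ⟨f, hf⟩ := Set.mem_iUnion.1 (ih hx)
    rw [h.Gsplit] at hf
    obtain ⟨j, hj⟩ := Set.mem_iUnion.1 hf
    refine Set.mem_iUnion.2 ⟨Fin.cons j f, ?_⟩
    rwa [List.ofFn_cons]

lemma ediam_cyl (h : DL F t g r) (w : List (Fin t)) :
    Metric.ediam (Gw g w '' F) ≤ ENNReal.ofReal ((w.map r).prod) * Metric.ediam F := by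
  have : LipschitzWith ((w.map r).prod).toNNReal (Gw g w) := LipschitzWith.of_dist_le_mul
    fun x y => by rw [h.Gsim, Real.coe_toNNReal _ (h.rw_pos w).1.le]
  exact this.ediam_image_le F

lemma hfin [MeasurableSpace Y] [BorelSpace Y] (h : DL F t g r) {s : ℝ} (hs : 0 < s)
    (hsum : ∑ j, r j ^ s = 1) : μH[s] F ≠ ⊤ := by
  obtain ⟨q, hq0, hq1, hq⟩ := h.exists_max
  have hdF : Metric.ediam F ≠ ⊤ := h.cpt.isBounded.ediam_ne_top
  have hle := Measure.hausdorffMeasure_le_liminf_sum (ι := fun k : ℕ => (Fin k → Fin t)) s F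
    (l := Filter.atTop)
    (fun k => ENNReal.ofReal (q ^ k) * Metric.ediam F) ?_
    (fun k f => Gw g (List.ofFn f) '' F) ?_ ?_
  · refine ne_top_of_le_ne_top (ENNReal.rpow_ne_top_of_nonneg hs.le hdF) (hle.trans ?_)
    have : ∀ k : ℕ, ∑ f : Fin k → Fin t, Metric.ediam (Gw g (List.ofFn f) '' F) ^ s
        ≤ Metric.ediam F ^ s := by
      intro k
      calc _ ≤ ∑ f : Fin k → Fin t, ENNReal.ofReal (∏ i, r (f i) ^ s) * Metric.ediam F ^ s := by
            refine Finset.sum_le_sum fun f _ => ?_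
            refine (ENNReal.rpow_le_rpow (h.ediam_cyl _) hs.le).trans ?_
            rw [ENNReal.mul_rpow_of_nonneg _ _ hs.le, ENNReal.ofReal_rpow_of_pos (h.rw_pos _).1,
              ← h.prod_rpow, List.map_ofFn, List.prod_ofFn]
            rfl
        _ = Metric.ediam F ^ s := by
            rw [← Finset.sum_mul, ← ENNReal.ofReal_sum_of_nonneg, ← Fintype.sum_pow (fun j => r j ^ s) k, hsum]
            · simp
            · intro f _
              exact Finset.prod_nonneg fun i _ => Real.rpow_nonneg (h.rr _).1.le _
    refine (Filter.liminf_le_liminf (Filter.Eventually.of_forall this)).trans ?_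
    simp
  · have : Filter.Tendsto (fun k : ℕ => ENNReal.ofReal (q ^ k)) Filter.atTop (nhds 0) := by
      rw [← ENNReal.ofReal_zero]
      exact ENNReal.tendsto_ofReal (tendsto_pow_atTop_nhds_zero_of_lt_one hq0.le hq1)
    simpa using ENNReal.Tendsto.mul_const this (Or.inr hdF)
  · refine Filter.Eventually.of_forall fun k f => (h.ediam_cyl _).trans ?_
    gcongr
    have := h.prod_le hq0 hq (List.ofFn f)
    simpa using this
  · exact Filter.Eventually.of_forall fun k => h.cover k

/-- word of the first k letters, reversed -/
def W {t : ℕ} (ω : ℕ → Fin t) : ℕ → List (Fin t)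
  | 0 => []
  | k + 1 => ω k :: W ω k

lemma W_congr {t : ℕ} (ω ω' : ℕ → Fin t) (k : ℕ) (hk : ∀ i < k, ω i = ω' i) :
    W ω k = W ω' k := by
  induction k with
  | zero => rfl
  | succ k ih => rw [W, W, ih fun i hi => hk i (by omega), hk k (by omega)]

lemma W_prod {t : ℕ} (p : Fin t → ℝ) (ω : ℕ → Fin t) (k : ℕ) :
    ((W ω k).map p).prod = ∏ i ∈ Finset.range k, p (ω i) := by
  induction k with
  | zero => simp [W]
  | succ k ih => simp [W, ih, Finset.prod_range_succ, mul_comm]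

lemma W_len {t : ℕ} (ω : ℕ → Fin t) (k : ℕ) : (W ω k).length = k := by
  induction k with
  | zero => simp [W]
  | succ k ih => simp [W, ih]

lemma coding (h : DL F t g r) (ω : ℕ → Fin t) : ∃ x, ∀ k, x ∈ Gw g (W ω k) '' F := by
  have := IsCompact.nonempty_iInter_of_sequence_nonempty_isCompact_isClosed
    (fun k => Gw g (W ω k) '' F) (fun k => by
      rw [h.Gsplit (W ω k)]
      exact Set.subset_iUnion (fun j => Gw g (j :: W ω k) '' F) (ω k))
    (fun k => h.ne.image _) (h.cpt.image (h.Gcont _)) (fun k => (h.cpt.image (h.Gcont _)).isClosed)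
  obtain ⟨x, hx⟩ := this
  exact ⟨x, fun k => Set.mem_iInter.1 hx k⟩

lemma exists_bern (h : DL F t g r) {s : ℝ} (hsum : ∑ j, r j ^ s = 1) :
    ∃ ν : Measure (ℕ → Fin t), ν Set.univ = 1 ∧ ∀ (ω : ℕ → Fin t) (k : ℕ),
      ν {ω' | ∀ i < k, ω' i = ω i} ≤ ENNReal.ofReal (((W ω k).map r).prod ^ s) := by
  have hnn : ∀ j, 0 ≤ r j ^ s := fun j => Real.rpow_nonneg (h.rr j).1.le s
  let P : PMF (Fin t) := PMF.ofFintype (fun j => ENNReal.ofReal (r j ^ s)) (by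
    rw [← ENNReal.ofReal_sum_of_nonneg fun j _ => hnn j, hsum, ENNReal.ofReal_one])
  refine ⟨Measure.infinitePi (fun _ : ℕ => P.toMeasure), measure_univ, fun ω k => ?_⟩
  have he : {ω' : ℕ → Fin t | ∀ i < k, ω' i = ω i}
      = Set.pi (Finset.range k : Set ℕ) (fun i => {ω i}) := by
    ext ω'; simp
  rw [he, Measure.infinitePi_pi _ (fun i _ => MeasurableSet.singleton _), ← h.prod_rpow, W_prod,
    ENNReal.ofReal_prod_of_nonneg fun i _ => hnn _]
  refine le_of_eq (Finset.prod_congr rfl fun i _ => ?_)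
  rw [PMF.toMeasure_apply_singleton _ _ (MeasurableSet.singleton _)]
  rfl

lemma hpos [MeasurableSpace Y] [BorelSpace Y] (h : DL F t g r) {s : ℝ} (hs : 0 < s)
    (hsum : ∑ j, r j ^ s = 1) : μH[s] F ≠ 0 := by
  obtain ⟨q, hq0, hq1, hq⟩ := h.exists_max
  obtain ⟨δ, hδ, hd⟩ := h.sep
  obtain ⟨ν, hν1, hν⟩ := h.exists_bern hsum
  choose π hπ using h.coding
  have key : ∀ S : Set Y, ENNReal.ofReal (δ ^ s) * ν (π ⁻¹' S) ≤ Metric.ediam S ^ s := by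
    intro S
    rcases Set.eq_empty_or_nonempty (π ⁻¹' S) with he | ⟨ω₀, h₀⟩
    · simp [he]
    by_cases hall : ∀ k, π ⁻¹' S ⊆ {ω' | ∀ i < k, ω' i = ω₀ i}
    · have hz : ν (π ⁻¹' S) = 0 := by
        have hb : ∀ k : ℕ, ν (π ⁻¹' S) ≤ ENNReal.ofReal ((q ^ k) ^ s) := fun k => by
          refine (measure_mono (hall k)).trans ((hν ω₀ k).trans (ENNReal.ofReal_le_ofReal ?_))
          refine Real.rpow_le_rpow (h.rw_pos _).1.le ?_ hs.le
          simpa [W_len] using h.prod_le hq0 hq (W ω₀ k)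
        have hl : Filter.Tendsto (fun k : ℕ => ENNReal.ofReal ((q ^ k) ^ s)) Filter.atTop
            (nhds 0) := by
          rw [← ENNReal.ofReal_zero]
          refine ENNReal.tendsto_ofReal ?_
          have := (tendsto_pow_atTop_nhds_zero_of_lt_one hq0.le hq1).rpow_const
            (p := s) (Or.inr hs.le)
          rwa [Real.zero_rpow hs.ne'] at this
        exact le_antisymm (ge_of_tendsto' hl hb) bot_le
      simp [hz]
    · push Not at hall
      classical
      have hk := Nat.find_spec hall
      set k := Nat.find hall with hkdef
      have hk0 : k ≠ 0 := by
        intro h0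
        rw [h0] at hk
        exact hk (by intro ω _; simp)
      obtain ⟨k', hk'⟩ := Nat.exists_eq_succ_of_ne_zero hk0
      have hsub : π ⁻¹' S ⊆ {ω' | ∀ i < k', ω' i = ω₀ i} := by
        have := Nat.find_min hall (m := k') (by omega)
        simpa using this
      obtain ⟨ω, hω, hne⟩ := Set.not_subset.1 hk
      have hag : ∀ i < k', ω i = ω₀ i := hsub hω
      have hne' : ω k' ≠ ω₀ k' := by
        intro hc
        apply hne
        intro i hi
        rcases (show i < k' ∨ i = k' by omega) with h1 | rfl
        · exact hag i h1
        · exact hc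
      have h1 := hπ ω (k' + 1)
      have h2 := hπ ω₀ (k' + 1)
      rw [W, W_congr ω ω₀ k' hag] at h1
      rw [W] at h2
      simp only [Gw, Set.image_comp] at h1 h2
      obtain ⟨x, hx, hx'⟩ := h1
      obtain ⟨y, hy, hy'⟩ := h2
      have hdist : δ * ((W ω₀ k').map r).prod ≤ dist (π ω) (π ω₀) := by
        rw [← hx', ← hy', h.Gsim]
        have := hd _ _ hne' x hx y hy
        nlinarith [(h.rw_pos (W ω₀ k')).1]
      have hpos := (h.rw_pos (W ω₀ k')).1
      calc ENNReal.ofReal (δ ^ s) * ν (π ⁻¹' S)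
          ≤ ENNReal.ofReal (δ ^ s) * ENNReal.ofReal (((W ω₀ k').map r).prod ^ s) := by
            gcongr
            exact (measure_mono hsub).trans (hν ω₀ k')
        _ = ENNReal.ofReal (δ * ((W ω₀ k').map r).prod) ^ s := by
            rw [ENNReal.ofReal_rpow_of_pos (mul_pos hδ hpos), Real.mul_rpow hδ.le hpos.le,
              ENNReal.ofReal_mul (Real.rpow_nonneg hδ.le s)]
        _ ≤ Metric.ediam S ^ s := by
            refine ENNReal.rpow_le_rpow ?_ hs.le
            refine (ENNReal.ofReal_le_ofReal hdist).trans ?_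
            rw [← edist_dist]
            exact Metric.edist_le_ediam_of_mem hω h₀
  have hle := OuterMeasure.le_mkMetric (fun x : ENNReal => x ^ s)
    (ENNReal.ofReal (δ ^ s) • OuterMeasure.map π ν.toOuterMeasure) 1 one_pos
    (fun S _ => by simpa using key S)
  have hF := hle F
  have hpre : π ⁻¹' F = Set.univ := by
    ext ω
    simp only [Set.mem_preimage, Set.mem_univ, iff_true]
    exact h.Gsub _ (hπ ω 0)
  have hδs : 0 < ENNReal.ofReal (δ ^ s) := ENNReal.ofReal_pos.2 (Real.rpow_pos_of_pos hδ s)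
  have he : μH[s] F = OuterMeasure.mkMetric (fun x : ENNReal => x ^ s) F := by
    rw [Measure.hausdorffMeasure, ← Measure.coe_toOuterMeasure, Measure.mkMetric_toOuterMeasure]
  rw [he]
  refine (lt_of_lt_of_le ?_ hF).ne'
  simpa [hpre, hν1] using Real.rpow_pos_of_pos hδ s

end DL

lemma image_haus_le {X Y : Type*} [MetricSpace X] [MetricSpace Y] [MeasurableSpace X]
    [BorelSpace X] [MeasurableSpace Y] [BorelSpace Y] (f : X → Y) (C s : ℝ) (hC : 0 < C)
    (hs : 0 ≤ s) (A : Set X) (hf : ∀ x ∈ A, ∀ y ∈ A, dist (f x) (f y) ≤ C * dist x y) :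
    μH[s] (f '' A) ≤ ENNReal.ofReal (C ^ s) * μH[s] A := by
  have h1 : LipschitzOnWith C.toNNReal f A := LipschitzOnWith.of_dist_le_mul fun x hx y hy => by
    rw [Real.coe_toNNReal _ hC.le]; exact hf x hx y hy
  have h2 := h1.hausdorffMeasure_image_le hs
  have h3 : ((C.toNNReal : NNReal) : ENNReal) ^ s = ENNReal.ofReal (C ^ s) := by
    rw [← ENNReal.ofReal_rpow_of_pos hC]; rfl
  rwa [h3] at h2

lemma main_dl {Y : Type*} [MetricSpace Y] [MeasurableSpace Y] [BorelSpace Y]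
    {F : Set Y} {t : ℕ} {g : Fin t → Y → Y} {r : Fin t → ℝ} (h : DL F t g r)
    {lam : ℝ} {n m : ℕ} {E : Set ℝ} {B : Finset ℝ} (hE : NF lam n m E B)
    (hm : 1 ≤ m) (hmn : m + 2 ≤ n)
    (φ : Y → ℝ) (C : ℝ) (hC : 0 < C) (hφE : φ '' F = E)
    (hφ1 : ∀ x ∈ F, ∀ y ∈ F, C⁻¹ * dist x y ≤ dist (φ x) (φ y))
    (hφ2 : ∀ x ∈ F, ∀ y ∈ F, dist (φ x) (φ y) ≤ C * dist x y) :
    ∃ a i : ℕ, 2 ≤ i ∧ m = a ^ i := by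
  obtain ⟨s, hs, hsum⟩ := h.exists_dim
  have hFfin := h.hfin hs hsum
  have hFpos := h.hpos hs hsum
  obtain ⟨δ, hδ, hd⟩ := h.sep
  have hl0 := hE.l0
  have hl1 : lam < 1 := by linarith [hE.l1]
  have hinj : Set.InjOn φ F := by
    intro x hx y hy hxy
    have h1 := hφ1 x hx y hy
    rw [hxy, dist_self] at h1
    have h2 : 0 < C⁻¹ := inv_pos.2 hC
    have h3 : dist x y ≤ 0 := by
      by_contra hc
      push Not at hc
      have := mul_pos h2 hc
      linarith
    exact dist_le_zero.1 h3
  have : Nonempty Y := ⟨h.ne.some⟩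
  -- lower bound
  have hlow : ∀ A ⊆ F, μH[s] A ≤ ENNReal.ofReal (C ^ s) * μH[s] (φ '' A) := by
    intro A hA
    have hinv := (hinj.mono hA).leftInvOn_invFunOn
    have h1 := image_haus_le (Function.invFunOn φ A) C s hC hs.le (φ '' A) (by
      rintro _ ⟨x, hx, rfl⟩ _ ⟨y, hy, rfl⟩
      rw [hinv hx, hinv hy]
      have := hφ1 x (hA hx) y (hA hy)
      rwa [inv_mul_le_iff₀ hC] at this)
    rwa [hinv.image_image] at h1
  have hup : ∀ A ⊆ F, μH[s] (φ '' A) ≤ ENNReal.ofReal (C ^ s) * μH[s] A := fun A hA =>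
    image_haus_le φ C s hC hs.le A fun x hx y hy => hφ2 x (hA hx) y (hA hy)
  have hfin : μH[s] E ≠ ⊤ := by
    rw [← hφE]
    exact ne_top_of_le_ne_top (ENNReal.mul_ne_top ENNReal.ofReal_ne_top hFfin) (hup F subset_rfl)
  have hpos : μH[s] E ≠ 0 := by
    intro h0
    have := hlow F subset_rfl
    rw [hφE, h0, mul_zero] at this
    exact hFpos (le_antisymm this bot_le)
  have hquad := hE.quad s hs hfin hpos
  have hϱ : 0 < lam ^ s := Real.rpow_pos_of_pos hl0 s
  set A : List (Fin t) → Set ℝ := fun w => φ '' (Gw g w '' F) with hA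
  have hAE : ∀ w, A w ⊆ E := fun w => by
    rw [← hφE]; exact Set.image_mono (h.Gsub w)
  have hAfin : ∀ w, μH[s] (A w) ≠ ⊤ := fun w => ne_top_of_le_ne_top hfin (measure_mono (hAE w))
  have hAne : ∀ w, (A w).Nonempty := fun w => (h.ne.image _).image _
  have hcyl : ∀ w, μH[s] (Gw g w '' F) = ENNReal.ofReal (((w.map r).prod) ^ s) * μH[s] F := fun w =>
    sim_hausdorff (Gw g w) _ s (h.rw_pos w).1 hs.le (h.Gsim w) F
  have hMpos : ∀ w, 0 < (μH[s]).real (A w) := by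
    intro w
    refine ENNReal.toReal_pos ?_ (hAfin w)
    intro h0
    have h1 := hlow _ (h.Gsub w)
    simp only [hA] at h0
    rw [h0, mul_zero, hcyl w] at h1
    have h2 := le_antisymm h1 bot_le
    rcases mul_eq_zero.1 h2 with h3 | h3
    · have := ENNReal.ofReal_pos.2 (Real.rpow_pos_of_pos (h.rw_pos w).1 s)
      exact this.ne' h3
    · exact hFpos h3
  have hφc : ContinuousOn φ F := by
    have h1 : LipschitzOnWith C.toNNReal φ F := LipschitzOnWith.of_dist_le_mul
      fun x hx y hy => by rw [Real.coe_toNNReal _ hC.le]; exact hφ2 x hx y hy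
    exact h1.continuousOn
  have hAmeas : ∀ w, MeasurableSet (A w) := fun w =>
    ((h.cpt.image (h.Gcont w)).image_of_continuousOn (hφc.mono (h.Gsub w))).measurableSet
  have hadd : ∀ w, (μH[s]).real (A w) = ∑ j, (μH[s]).real (A (j :: w)) := by
    intro w
    have h1 : A w = ⋃ j, A (j :: w) := by
      simp only [hA]
      rw [h.Gsplit w, Set.image_iUnion]
    rw [h1]
    refine measureReal_iUnion_fintype ?_ (fun j => hAmeas _) (fun j => hAfin _)
    intro i j hij
    refine Set.disjoint_left.2 ?_
    rintro _ ⟨x, hx, rfl⟩ ⟨y, hy, hxy⟩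
    have hxy' := hinj (h.Gsub _ hy) (h.Gsub _ hx) hxy
    rw [hxy'] at hy
    exact Set.disjoint_left.1 (h.Gdisj w i j hij) hx hy
  have hMle : ∀ w : List (Fin t), (μH[s]).real (A w) ≤
      (C ^ s * (μH[s]).real F) * (w.map (fun j => r j ^ s)).prod := by
    intro w
    have h1 := hup _ (h.Gsub w)
    rw [hcyl w] at h1
    have h2 := ENNReal.toReal_mono (ENNReal.mul_ne_top ENNReal.ofReal_ne_top
      (ENNReal.mul_ne_top ENNReal.ofReal_ne_top hFfin)) h1
    rw [ENNReal.toReal_mul, ENNReal.toReal_mul,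
      ENNReal.toReal_ofReal (Real.rpow_nonneg hC.le s),
      ENNReal.toReal_ofReal (Real.rpow_nonneg (h.rw_pos w).1.le s), ← h.prod_rpow] at h2
    refine h2.trans (le_of_eq ?_)
    rw [Measure.real]; ring
  -- levels
  set c : ℝ := min 1 (C⁻¹ * δ) with hc
  have hCi : 0 < C⁻¹ := inv_pos.2 hC
  have hc0 : 0 < c := lt_min one_pos (mul_pos hCi hδ)
  have hc1 : c ≤ 1 := min_le_left _ _
  have hcδ : c ≤ C⁻¹ * δ := min_le_right _ _
  have hlev : ∀ w : List (Fin t), ∃ k : ℕ, lam ^ (k + 1) < c * (w.map r).prod ∧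
      c * (w.map r).prod ≤ lam ^ k := fun w =>
    exists_nat_pow_near_of_lt_one (mul_pos hc0 (h.rw_pos w).1)
      (mul_le_one₀ hc1 (h.rw_pos w).1.le (h.rw_pos w).2) hl0 hl1
  choose k hk1 hk2 using hlev
  obtain ⟨N, hN⟩ := hE.clopen_measure s hs hfin (C * Metric.diam F / (c * lam))
  have hform : ∀ w, ∃ a ≤ N, ∃ b ≤ N, (μH[s]).real (A w) =
        (lam ^ s) ^ (k w + 1) * ((μH[s]).real E * ((a:ℝ) - lam ^ s * (b:ℝ))) := by
    intro w
    refine hN (k w + 1) (A w) (hAE w) (hAne w) ?_ ?_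
    · rintro _ ⟨x, hx, rfl⟩ y hy hyA
      rw [← hφE] at hy
      obtain ⟨y, hyF, rfl⟩ := hy
      have hyn : y ∉ Gw g w '' F := fun hc => hyA ⟨y, hc, rfl⟩
      have h1 := h.Gsep hδ hd w x hx y hyF hyn
      have h2 := hφ1 x (h.Gsub w hx) y hyF
      have h3 := mul_le_mul_of_nonneg_left h1 hCi.le
      have h4 := mul_le_mul_of_nonneg_right hcδ (h.rw_pos w).1.le
      have h5 := hk1 w
      linarith
    · rintro _ ⟨_, ⟨x, hx, rfl⟩, rfl⟩ _ ⟨_, ⟨y, hy, rfl⟩, rfl⟩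
      have h2 := hφ2 _ (h.Gsub w ⟨x, hx, rfl⟩) _ (h.Gsub w ⟨y, hy, rfl⟩)
      rw [h.Gsim] at h2
      have h3 : dist x y ≤ Metric.diam F := Metric.dist_le_diam_of_mem h.cpt.isBounded hx hy
      have h4 := hk2 w
      have h5 : (w.map r).prod ≤ lam ^ k w / c := by
        rw [le_div_iff₀ hc0]; linarith
      have h6 : (w.map r).prod * dist x y ≤ lam ^ k w / c * Metric.diam F :=
        mul_le_mul h5 h3 dist_nonneg (by positivity)
      refine h2.trans ((mul_le_mul_of_nonneg_left h6 hC.le).trans (le_of_eq ?_))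
      rw [pow_succ]; field_simp
  have hrel := core_rel t (fun j => r j ^ s) (fun j => Real.rpow_pos_of_pos (h.rr j).1 s)
    (fun j => Real.rpow_lt_one (h.rr j).1.le (h.rr j).2 hs) hsum
    (fun w => (μH[s]).real (A w)) hMpos hadd _ hMle (lam ^ s) hϱ
    ((fun q : ℕ × ℕ => (μH[s]).real E * ((q.1:ℝ) - lam ^ s * (q.2:ℝ))) ''
      (Set.Iic N ×ˢ Set.Iic N)) (((Set.finite_Iic N).prod (Set.finite_Iic N)).image _)
    (fun w => k w + 1) (fun w => by
      obtain ⟨a, ha, b, hb, he⟩ := hform w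
      exact ⟨_, ⟨(a, b), ⟨ha, hb⟩, rfl⟩, he⟩)
  have hstep : ∃ D : ℕ, ∀ w j, ∃ e ≤ D, k (j :: w) + 1 = k w + 1 + e := by
    have hD : ∀ j, ∃ D : ℕ, lam ^ D < lam * r j := fun j =>
      exists_pow_lt_of_lt_one (mul_pos hl0 (h.rr j).1) hl1
    choose D hD using hD
    refine ⟨∑ j, D j, fun w j => ?_⟩
    have e1 := hk1 w
    have e2 := hk2 w
    have e3 := hk1 (j :: w)
    have e4 := hk2 (j :: w)
    simp only [List.map_cons, List.prod_cons] at e3 e4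
    have hp := (h.rw_pos w).1
    have hr := h.rr j
    have hle : k w ≤ k (j :: w) := by
      have h1 : lam ^ (k (j :: w) + 1) < lam ^ k w := by
        have : c * (r j * (w.map r).prod) ≤ c * (w.map r).prod := by
          apply mul_le_mul_of_nonneg_left _ hc0.le; nlinarith
        linarith
      have := (pow_lt_pow_iff_right_of_lt_one₀ hl0 hl1).1 h1
      omega
    have hub : k (j :: w) ≤ k w + D j := by
      have h1 : lam ^ (k w + D j) < lam ^ k (j :: w) := by
        calc lam ^ (k w + D j) = lam ^ k w * lam ^ D j := pow_add _ _ _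
          _ < lam ^ k w * (lam * r j) := mul_lt_mul_of_pos_left (hD j) (by positivity)
          _ = lam ^ (k w + 1) * r j := by ring
          _ < c * (w.map r).prod * r j := mul_lt_mul_of_pos_right e1 hr.1
          _ = c * (r j * (w.map r).prod) := by ring
          _ ≤ _ := e4
      exact ((pow_lt_pow_iff_right_of_lt_one₀ hl0 hl1).1 h1).le
    have hs' : D j ≤ ∑ j, D j := Finset.single_le_sum (fun _ _ => Nat.zero_le _) (Finset.mem_univ j)
    exact ⟨k (j :: w) - k w, by omega, by omega⟩
  obtain ⟨D, hD⟩ := hstep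
  have hfinal := hrel D hD
  exact nt_final n m hm hmn (lam ^ s) hϱ hquad t (by have := h.ht; omega) (fun j => r j ^ s)
    (fun j => Real.rpow_pos_of_pos (h.rr j).1 s) hsum hfinal

/-- If `E ∈ 𝒜(λ, n, m)` is Lipschitz equivalent to some dust-like
self-similar set, then `m` is a perfect power: `m = a^i` with `a, i ∈ ℕ`, `i ≥ 2`. -/
theorem perfectPower_of_lipEquiv_dustLike
    (lam : ℝ) (n m : ℕ) (E : Set ℝ) (hE : IsInClassA lam n m E)
    (hF : ∃ (d : ℕ) (F : Set (EuclideanSpace ℝ (Fin d))), IsDustLike F ∧ LipEquiv E F) :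
    ∃ a i : ℕ, 2 ≤ i ∧ m = a ^ i := by
  obtain ⟨d, F, hF, f, hf, C, hC, hb⟩ := hF
  obtain ⟨hne, hcpt, t, ht, g, r, hr, hsim, heq, hdisj⟩ := hF
  obtain ⟨B, hB⟩ := exists_NF lam n m E hE
  obtain ⟨-, hm, hmn, -⟩ := hE
  have h : DL F t g r := ⟨hne, hcpt, ht, fun j => ⟨(hr j).1, (hr j).2⟩, hsim, heq, hdisj⟩
  classical
  let e := Equiv.ofBijective f hf
  let φ : EuclideanSpace ℝ (Fin d) → ℝ := fun y => if hy : y ∈ F then (e.symm ⟨y, hy⟩ : ℝ) else 0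
  have hφ : ∀ y (hy : y ∈ F), φ y = (e.symm ⟨y, hy⟩ : ℝ) := fun y hy => dif_pos hy
  have hfe : ∀ z, f (e.symm z) = z := fun z => e.apply_symm_apply z
  refine main_dl h hB hm hmn φ C hC ?_ ?_ ?_
  · ext x
    constructor
    · rintro ⟨y, hy, rfl⟩
      rw [hφ y hy]; exact (e.symm ⟨y, hy⟩).2
    · intro hx
      refine ⟨f ⟨x, hx⟩, (f ⟨x, hx⟩).2, ?_⟩
      rw [hφ _ (f ⟨x, hx⟩).2]
      have : e.symm (f ⟨x, hx⟩) = ⟨x, hx⟩ := e.symm_apply_apply _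
      exact congrArg Subtype.val this
  · intro x hx y hy
    have := (hb (e.symm ⟨x, hx⟩) (e.symm ⟨y, hy⟩)).2
    rw [hfe, hfe] at this
    rw [hφ x hx, hφ y hy, inv_mul_le_iff₀ hC]
    exact this
  · intro x hx y hy
    have := (hb (e.symm ⟨x, hx⟩) (e.symm ⟨y, hy⟩)).1
    rw [hfe, hfe, inv_mul_le_iff₀ hC] at this
    rw [hφ x hx, hφ y hy]
    exact this
end
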